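/- arXiv:1912.11104 — 2 statements merged into one kernel-verified Lean document; each statement's English description precedes it below -/
import Mathlib

section
/- Let G be a graph of the tetrahedral model and let {e_L, e_R} be two color-0 edges that do not form a 2-edge-cut. For any flip of {e_L, e_R}, and for each color c ∈ {1,2,3}, the variation of the number of faces of color c satisfies |F_c(G') − F_c(G)| ≤ 1. -/
/-!  A combinatorial model of the Feynman graphs of the rank-3 tetrahedral
(`O(N)^3`) tensor model.

A graph consists of a finite set `B` of bubbles (copies of the tetrahedron
`K_4`); each bubble has four vertices, so the vertex set is `B × Fin 4`.
Inside every bubble the edges of colors `1,2,3` are given once and for all by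
the three fixed-point-free involutions of `Fin 4` (the proper 3-edge-coloring
of `K_4`).  The color-0 propagator edges, one per vertex, are encoded by a
fixed-point-free involution `pairing` of the vertex set. -/

open Equiv

/-- The color-`c` (for `c ∈ {1,2,3}`, here `c : Fin 3`) perfect matching on the
four vertices of a tetrahedral bubble. -/
def bubblePerm : Fin 3 → Equiv.Perm (Fin 4) :=
  ![Equiv.swap 0 1 * Equiv.swap 2 3,
    Equiv.swap 0 2 * Equiv.swap 1 3,
    Equiv.swap 0 3 * Equiv.swap 1 2]

/-- A Feynman graph of the tetrahedral tensor model: a finite set of `K_4`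
bubbles together with a fixed-point-free involution of the vertex set
describing the color-0 edges. -/
structure TGraph where
  B : Type
  [fintypeB : Fintype B]
  [decB : DecidableEq B]
  pairing : Equiv.Perm (B × Fin 4)
  invol : ∀ v, pairing (pairing v) = v
  fixfree : ∀ v, pairing v ≠ v

attribute [instance] TGraph.fintypeB TGraph.decB

namespace TGraph

/-- The vertex set of a graph. -/
abbrev V (G : TGraph) : Type := G.B × Fin 4

/-- The permutation of the vertices given by the color-`c` edges inside the
bubbles. -/
def colPerm (G : TGraph) (c : Fin 3) : Equiv.Perm G.V :=
  (Equiv.refl G.B).prodCongr (bubblePerm c)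

/-- The number of bubbles of a graph. -/
def b (G : TGraph) : ℕ := Fintype.card G.B

/-- The subgroup of permutations of the vertices generated by the color-0
pairing and the color-`c` matching: its orbits are exactly the faces of
color `c` (cycles alternating colors `0` and `c`). -/
def faceGroup (G : TGraph) (c : Fin 3) : Subgroup (Equiv.Perm G.V) :=
  Subgroup.closure {G.pairing, G.colPerm c}

/-- Two vertices lie on the same face of color `c`. -/
def sameFace (G : TGraph) (c : Fin 3) (u v : G.V) : Prop :=
  u ∈ MulAction.orbit (G.faceGroup c) v

/-- The number of faces of color `c` of the graph. -/
noncomputable def numFaces (G : TGraph) (c : Fin 3) : ℕ :=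
  Nat.card (MulAction.orbitRel.Quotient (G.faceGroup c) G.V)

/-- The total number of faces of the graph. -/
noncomputable def F (G : TGraph) : ℕ := ∑ c : Fin 3, G.numFaces c

/-- The length of the face of color `c` through the vertex `v` (a face of
length `n` consists of `n` color-0 edges and `n` color-`c` edges, hence `2n`
vertices). -/
noncomputable def faceLength (G : TGraph) (c : Fin 3) (v : G.V) : ℕ :=
  Nat.card (MulAction.orbit (G.faceGroup c) v) / 2

/-- The subgroup generated by all edges of the graph. -/
def fullGroup (G : TGraph) : Subgroup (Equiv.Perm G.V) :=
  Subgroup.closure ({G.pairing} ∪ Set.range G.colPerm)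

/-- A graph is connected if any vertex can be reached from any other one along
its edges. -/
def Connected (G : TGraph) : Prop :=
  ∀ u v : G.V, u ∈ MulAction.orbit G.fullGroup v

/-- One step along an edge of the graph avoiding the color-0 edges whose
endpoints belong to `S`. -/
def stepAvoiding (G : TGraph) (S : Set G.V) (u v : G.V) : Prop :=
  (∃ c, v = G.colPerm c u) ∨ (v = G.pairing u ∧ u ∉ S ∧ v ∉ S)

/-- Reachability in the graph with the color-0 edges meeting `S` removed. -/
def reachAvoiding (G : TGraph) (S : Set G.V) : G.V → G.V → Prop :=
  Relation.ReflTransGen (G.stepAvoiding S)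

/-- The pair of color-0 edges through the vertices `u` and `w` disconnects the
graph when removed.  Together with the requirement that the two edges be
distinct, this is the notion of a 2-edge-cut of color-0 edges. -/
def CutDisconnects (G : TGraph) (u w : G.V) : Prop :=
  ¬ ∀ x y : G.V, G.reachAvoiding {u, G.pairing u, w, G.pairing w} x y

/-- Two vertices are connected by a 2-point function if they are joined by a
color-0 edge, or if their two (distinct) color-0 edges form a 2-edge-cut. -/
def TwoPoint (G : TGraph) (x y : G.V) : Prop :=
  G.pairing x = y ∨ (y ≠ x ∧ y ≠ G.pairing x ∧ G.CutDisconnects x y)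

/-- The flip of the two color-0 edges `{u, pairing u}` and `{w, pairing w}`
(assumed distinct) which reconnects `u` with `w` (and `pairing u` with
`pairing w`): the pairing is conjugated by the transposition exchanging
`pairing u` and `w`.  The other flip of this pair of edges is
`G.flip u (G.pairing w)`. -/
def flip (G : TGraph) (u w : G.V) : TGraph where
  B := G.B
  pairing := Equiv.swap (G.pairing u) w * G.pairing * Equiv.swap (G.pairing u) w
  invol := by
    intro v
    simp only [Equiv.Perm.mul_apply, Equiv.swap_apply_self, G.invol]
  fixfree := by
    intro v h
    simp only [Equiv.Perm.mul_apply] at h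
    have h' : G.pairing (Equiv.swap (G.pairing u) w v) = Equiv.swap (G.pairing u) w v := by
      have := congrArg (Equiv.swap (G.pairing u) w) h
      simpa using this
    exact G.fixfree _ h'

/-- The face of color `c` through the color-0 edge `{v, pairing v}` has
length 2 (it consists of this edge, a color-`c` edge, a second color-0 edge
and a second color-`c` edge closing the cycle). -/
def FaceLen2 (G : TGraph) (c : Fin 3) (v : G.V) : Prop :=
  G.pairing v ≠ G.colPerm c v ∧
    G.pairing (G.colPerm c (G.pairing v)) = G.colPerm c v

/-- A proper face of length 2 of color `c` through `v`: a face of length 2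
whose two color-0 edges connect two distinct bubbles. -/
def ProperFace2 (G : TGraph) (c : Fin 3) (v : G.V) : Prop :=
  G.FaceLen2 c v ∧ (G.pairing v).1 ≠ v.1

/-- A graph maximizes the number of faces if it is connected and no connected
graph with the same number of bubbles has more faces. -/
def MaximizesFaces (G : TGraph) : Prop :=
  G.Connected ∧ ∀ H : TGraph, H.Connected → H.b = G.b → H.F ≤ G.F

/-- Isomorphisms of graphs: bijections of the vertex sets commuting with the
color-0 pairing and with the colored matchings inside the bubbles. -/
structure Iso (G H : TGraph) where
  toEquiv : G.V ≃ H.V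
  map_pairing : ∀ v, toEquiv (G.pairing v) = H.pairing (toEquiv v)
  map_col : ∀ c v, toEquiv (G.colPerm c v) = H.colPerm c (toEquiv v)

/-- Two graphs are isomorphic. -/
def IsIso (G H : TGraph) : Prop := Nonempty (Iso G H)

end TGraph

open TGraph

/-- The leading-order two-bubble graph `G_2`: two tetrahedral bubbles with
corresponding vertices joined by four color-0 edges, so that all six faces
have length 2. -/
def G2 : TGraph where
  B := Fin 2
  pairing := (Equiv.swap (0 : Fin 2) 1).prodCongr (Equiv.refl (Fin 4))
  invol := by
    rintro ⟨i, k⟩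
    simp [Equiv.prodCongr_apply, Equiv.swap_apply_self]
  fixfree := by
    rintro ⟨i, k⟩ h
    have hi : Equiv.swap (0 : Fin 2) 1 i = i := congrArg Prod.fst h
    fin_cases i <;> simp_all

/-- The double tadpole `G_1^{(c)}`: one tetrahedral bubble whose two color-0
edges each join two vertices already adjacent by an edge of color `c`. -/
def G1 (c : Fin 3) : TGraph where
  B := Fin 1
  pairing := (Equiv.refl (Fin 1)).prodCongr (bubblePerm c)
  invol := by
    rintro ⟨i, k⟩
    have hk : ∀ j : Fin 4, bubblePerm c (bubblePerm c j) = j := by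
      fin_cases c <;> decide
    simp [Equiv.prodCongr_apply, hk]
  fixfree := by
    rintro ⟨i, k⟩ h
    have hk : bubblePerm c k = k := congrArg Prod.snd h
    have hne : ∀ j : Fin 4, bubblePerm c j ≠ j := by
      fin_cases c <;> decide
    exact hne k hk

namespace TGraph

variable (H K : TGraph)

/-- The image of a vertex of `H` in the glued graph. -/
def inlV (x : H.V) : (H.B ⊕ K.B) × Fin 4 := (Sum.inl x.1, x.2)

/-- The image of a vertex of `K` in the glued graph. -/
def inrV (y : K.V) : (H.B ⊕ K.B) × Fin 4 := (Sum.inr y.1, y.2)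

/-- The underlying function of the pairing of the graph obtained by gluing `H`
and `K` along the color-0 edges `{p, H.pairing p}` and `{q, K.pairing q}`:
these two edges are cut and the half-edges are reglued as `p — q` and
`H.pairing p — K.pairing q`.  The new pair of edges is a 2-edge-cut of the
resulting graph when `H` and `K` are connected. -/
def glueFun (p : H.V) (q : K.V) : (H.B ⊕ K.B) × Fin 4 → (H.B ⊕ K.B) × Fin 4 :=
  fun z =>
    match z with
    | (Sum.inl u, k) =>
        if (u, k) = p then inrV H K q
        else if (u, k) = H.pairing p then inrV H K (K.pairing q)
        else inlV H K (H.pairing (u, k))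
    | (Sum.inr u, k) =>
        if (u, k) = q then inlV H K p
        else if (u, k) = K.pairing q then inlV H K (H.pairing p)
        else inrV H K (K.pairing (u, k))

theorem glueFun_inlV (p : H.V) (q : K.V) (x : H.V) :
    glueFun H K p q (inlV H K x) =
      if x = p then inrV H K q
      else if x = H.pairing p then inrV H K (K.pairing q)
      else inlV H K (H.pairing x) := by
  cases x
  rfl

theorem glueFun_inrV (p : H.V) (q : K.V) (y : K.V) :
    glueFun H K p q (inrV H K y) =
      if y = q then inlV H K p
      else if y = K.pairing q then inlV H K (H.pairing p)
      else inrV H K (K.pairing y) := by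
  cases y
  rfl

theorem inlV_injective : Function.Injective (inlV H K) := by
  rintro ⟨u, k⟩ ⟨u', k'⟩ h
  have h1 : (Sum.inl u : H.B ⊕ K.B) = Sum.inl u' := congrArg Prod.fst h
  have h2 : k = k' := congrArg Prod.snd h
  exact Prod.ext (Sum.inl_injective h1) h2

theorem inrV_injective : Function.Injective (inrV H K) := by
  rintro ⟨u, k⟩ ⟨u', k'⟩ h
  have h1 : (Sum.inr u : H.B ⊕ K.B) = Sum.inr u' := congrArg Prod.fst h
  have h2 : k = k' := congrArg Prod.snd h
  exact Prod.ext (Sum.inr_injective h1) h2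

theorem inlV_ne_inrV (x : H.V) (y : K.V) : inlV H K x ≠ inrV H K y := by
  intro h
  exact Sum.inl_ne_inr (congrArg Prod.fst h)

theorem glueFun_invol_inl (p : H.V) (q : K.V) (x : H.V) :
    glueFun H K p q (glueFun H K p q (inlV H K x)) = inlV H K x := by
  rw [glueFun_inlV]
  by_cases h1 : x = p
  · rw [if_pos h1, glueFun_inrV, if_pos rfl, h1]
  · by_cases h2 : x = H.pairing p
    · rw [if_neg h1, if_pos h2, glueFun_inrV,
        if_neg (fun h => K.fixfree q h), if_pos rfl, h2]
    · have hne1 : H.pairing x ≠ p := by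
        intro h; apply h2
        have := congrArg H.pairing h
        rw [H.invol] at this; exact this
      have hne2 : H.pairing x ≠ H.pairing p := fun h => h1 (H.pairing.injective h)
      rw [if_neg h1, if_neg h2, glueFun_inlV, if_neg hne1, if_neg hne2, H.invol]

theorem glueFun_invol_inr (p : H.V) (q : K.V) (y : K.V) :
    glueFun H K p q (glueFun H K p q (inrV H K y)) = inrV H K y := by
  rw [glueFun_inrV]
  by_cases h1 : y = q
  · rw [if_pos h1, glueFun_inlV, if_pos rfl, h1]
  · by_cases h2 : y = K.pairing q
    · rw [if_neg h1, if_pos h2, glueFun_inlV,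
        if_neg (fun h => H.fixfree p h), if_pos rfl, h2]
    · have hne1 : K.pairing y ≠ q := by
        intro h; apply h2
        have := congrArg K.pairing h
        rw [K.invol] at this; exact this
      have hne2 : K.pairing y ≠ K.pairing q := fun h => h1 (K.pairing.injective h)
      rw [if_neg h1, if_neg h2, glueFun_inrV, if_neg hne1, if_neg hne2, K.invol]

theorem glueFun_involutive (p : H.V) (q : K.V) :
    Function.Involutive (glueFun H K p q) := by
  rintro ⟨(u | u), k⟩
  · exact glueFun_invol_inl H K p q (u, k)
  · exact glueFun_invol_inr H K p q (u, k)

theorem glueFun_fixfree (p : H.V) (q : K.V) :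
    ∀ z, glueFun H K p q z ≠ z := by
  have hl : ∀ x : H.V, glueFun H K p q (inlV H K x) ≠ inlV H K x := by
    intro x h
    rw [glueFun_inlV] at h
    by_cases h1 : x = p
    · rw [if_pos h1] at h
      exact inlV_ne_inrV H K x q h.symm
    · by_cases h2 : x = H.pairing p
      · rw [if_neg h1, if_pos h2] at h
        exact inlV_ne_inrV H K x (K.pairing q) h.symm
      · rw [if_neg h1, if_neg h2] at h
        exact H.fixfree x (inlV_injective H K h)
  have hr : ∀ y : K.V, glueFun H K p q (inrV H K y) ≠ inrV H K y := by
    intro y h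
    rw [glueFun_inrV] at h
    by_cases h1 : y = q
    · rw [if_pos h1] at h
      exact inlV_ne_inrV H K p y h
    · by_cases h2 : y = K.pairing q
      · rw [if_neg h1, if_pos h2] at h
        exact inlV_ne_inrV H K (H.pairing p) y h
      · rw [if_neg h1, if_neg h2] at h
        exact K.fixfree y (inrV_injective H K h)
  rintro ⟨(u | u), k⟩
  · exact hl (u, k)
  · exact hr (u, k)

/-- Gluing two graphs along a pair of color-0 edges.  When `H` and `K` are
connected, the two new color-0 edges form a 2-edge-cut of the glued graph, and
conversely every connected graph with a color-0 2-edge-cut arises this way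
from the two closed graphs obtained by cutting the two edges and closing each
side. -/
def glue (p : H.V) (q : K.V) : TGraph where
  B := H.B ⊕ K.B
  pairing := (glueFun_involutive H K p q).toPerm
  invol := fun v => glueFun_involutive H K p q v
  fixfree := fun v => glueFun_fixfree H K p q v

/-- Insertion of a melonic dipole (the 2-point graph obtained by cutting one
color-0 edge of `G_2`) on the color-0 edge `{v, G.pairing v}` of `G`. -/
def insertDipole (G : TGraph) (v : G.V) : TGraph :=
  glue G G2 v ((0 : Fin 2), (0 : Fin 4))

end TGraph

open TGraph

/-- Melonic graphs (up to isomorphism): `G_2` is melonic, and inserting a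
melonic dipole on any color-0 edge of a melonic graph yields a melonic
graph. -/
inductive IsMelonic : TGraph → Prop
  | base {G : TGraph} (h : IsIso G G2) : IsMelonic G
  | insert {G : TGraph} (hG : IsMelonic G) (v : G.V) {H : TGraph}
      (h : IsIso H (G.insertDipole v)) : IsMelonic H

/-- Double tadpoles decorated with melonic 2-point functions (up to
isomorphism): these are exactly the graphs obtained from one of the double
tadpoles `G_1^{(c)}` by repeatedly inserting melonic dipoles on color-0 edges,
i.e. double tadpoles whose two color-0 edges are replaced by melonic 2-point
functions. -/
inductive IsDecoratedTadpole : TGraph → Prop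
  | base {G : TGraph} (c : Fin 3) (h : IsIso G (G1 c)) : IsDecoratedTadpole G
  | insert {G : TGraph} (hG : IsDecoratedTadpole G) (v : G.V) {H : TGraph}
      (h : IsIso H (G.insertDipole v)) : IsDecoratedTadpole H

namespace TGraph

theorem apply_eq_of_mem_closure {α β : Type*} {S : Set (Perm α)} {f : α → β}
    (hf : ∀ g ∈ S, ∀ x, f (g x) = f x) {g : Perm α} (hg : g ∈ Subgroup.closure S) (x : α) :
    f (g x) = f x := by
  induction hg using Subgroup.closure_induction generalizing x with
  | mem g hg => exact hf g hg x
  | one => rfl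
  | mul g h _ _ ihg ihh => rw [Perm.mul_apply, ihg, ihh]
  | inv g _ ih => simpa using (ih (g⁻¹ x)).symm

/-- If every generator in `T` preserves the orbits of `⟨S⟩`, except that it may map points of
the orbits of `a` and `b` to each other, then `⟨S⟩` has at most one orbit more than `⟨T⟩`. -/
theorem card_orbits_closure_le_add_one {α : Type*} [Finite α] {S T : Set (Perm α)} (a b : α)
    (h : ∀ g ∈ T, ∀ x, MulAction.orbitRel (Subgroup.closure S) α (g x) x ∨
      ((MulAction.orbitRel (Subgroup.closure S) α (g x) a ∨
          MulAction.orbitRel (Subgroup.closure S) α (g x) b) ∧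
        (MulAction.orbitRel (Subgroup.closure S) α x a ∨
          MulAction.orbitRel (Subgroup.closure S) α x b))) :
    Nat.card (MulAction.orbitRel.Quotient (Subgroup.closure S) α) ≤
      Nat.card (MulAction.orbitRel.Quotient (Subgroup.closure T) α) + 1 := by
  classical
  let r := MulAction.orbitRel (Subgroup.closure S) α
  let f : α → Quotient r := fun x =>
    if Quotient.mk r x = Quotient.mk r b then Quotient.mk r a else Quotient.mk r x
  have hf : ∀ g ∈ T, ∀ x, f (g x) = f x := by
    intro g hg x
    have hgx := h g hg x
    change r _ _ ∨ ((r _ _ ∨ r _ _) ∧ (r _ _ ∨ r _ _)) at hgx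
    simp only [← Quotient.eq] at hgx
    grind
  let F : Option (MulAction.orbitRel.Quotient (Subgroup.closure T) α) → Quotient r := fun o =>
    o.elim (Quotient.mk r b) (Quotient.lift f (by
      rintro x y ⟨⟨g, hg⟩, rfl⟩
      exact apply_eq_of_mem_closure hf hg y))
  have hF : Function.Surjective F := by
    intro k
    induction k using Quotient.inductionOn with
    | h x =>
      by_cases hx : Quotient.mk r x = Quotient.mk r b
      · exact ⟨none, hx.symm⟩
      · exact ⟨some (Quotient.mk _ x), if_neg hx⟩
  have : Finite (MulAction.orbitRel.Quotient (Subgroup.closure T) α) := Quotient.finite _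
  rw [← Finite.card_option]
  exact Nat.card_le_card_of_surjective F hF

theorem orbitRel_closure_apply {α : Type*} {S : Set (Perm α)} {g : Perm α} (hg : g ∈ S) (x : α) :
    MulAction.orbitRel (Subgroup.closure S) α (g x) x :=
  ⟨⟨g, Subgroup.subset_closure hg⟩, rfl⟩

/-- If `p'` agrees with `p` except that it may permute the points `a`, `p a`, `b` and `p b`
differently, then `⟨p, q⟩` has at most one orbit more than `⟨p', q⟩`. -/
theorem card_orbits_pair_le_add_one {α : Type*} [Finite α] (p p' q : Perm α) (a b : α)
    (hp : ∀ x, p' x = p x ∨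
      (p' x ∈ ({a, p a, b, p b} : Set α) ∧ x ∈ ({a, p a, b, p b} : Set α))) :
    Nat.card (MulAction.orbitRel.Quotient (Subgroup.closure {p, q}) α) ≤
      Nat.card (MulAction.orbitRel.Quotient (Subgroup.closure {p', q}) α) + 1 := by
  have hr := fun x => orbitRel_closure_apply (S := {p, q}) (g := p) (by simp) x
  have hS : ∀ x ∈ ({a, p a, b, p b} : Set α),
      MulAction.orbitRel (Subgroup.closure {p, q}) α x a ∨
        MulAction.orbitRel (Subgroup.closure {p, q}) α x b := by
    rintro x (rfl | rfl | rfl | rfl)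
    · exact Or.inl (Setoid.refl' _ _)
    · exact Or.inl (hr a)
    · exact Or.inr (Setoid.refl' _ _)
    · exact Or.inr (hr b)
  refine card_orbits_closure_le_add_one a b ?_
  rintro g (rfl | rfl) x
  · rcases hp x with hx | ⟨hx, hx'⟩
    · exact Or.inl (hx ▸ hr x)
    · exact Or.inr ⟨hS _ hx, hS _ hx'⟩
  · exact Or.inl (orbitRel_closure_apply (by simp) x)

/-- Reconnecting the edges `{u, p u}` and `{w, p w}` of a perfect matching `p` changes the
number of orbits of `⟨p, q⟩` by at most one. -/
theorem abs_card_orbits_swap_conj_sub_le_one {α : Type*} [Finite α] [DecidableEq α]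
    (p q : Perm α) (hinv : ∀ v, p (p v) = v) (hfix : ∀ v, p v ≠ v) {u w : α}
    (hw : w ≠ u) :
    |(Nat.card (MulAction.orbitRel.Quotient
        (Subgroup.closure {swap (p u) w * p * swap (p u) w, q}) α) : ℤ) -
      Nat.card (MulAction.orbitRel.Quotient (Subgroup.closure {p, q}) α)| ≤ 1 := by
  set p' : Perm α := swap (p u) w * p * swap (p u) w with hp'
  have hp'_apply : ∀ x, p' x = swap (p u) w (p (swap (p u) w x)) := fun _ => rfl
  clear_value p'
  simp only [swap_apply_def] at hp'_apply
  have h1 := card_orbits_pair_le_add_one p p' q u w (by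
    simp only [Set.mem_insert_iff, Set.mem_singleton_iff]
    grind)
  have h2 := card_orbits_pair_le_add_one p' p q u (p u) (by
    simp only [Set.mem_insert_iff, Set.mem_singleton_iff]
    grind)
  rw [abs_le]
  omega

theorem abs_numFaces_flip_sub_le_one (G : TGraph) (u w : G.V) (hw : w ≠ u) (c : Fin 3) :
    |(((G.flip u w).numFaces c : ℤ) - (G.numFaces c : ℤ))| ≤ 1 :=
  abs_card_orbits_swap_conj_sub_le_one G.pairing (G.colPerm c) G.invol G.fixfree hw

end TGraph

/-- If the two color-0 edges `{u, pairing u}` and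
`{w, pairing w}` are distinct and do not form a 2-edge-cut, then for either of
the two flips of this pair of edges and each color `c`, the number of faces of
color `c` varies by at most one. -/
theorem flip_face_variation_le_one (G : TGraph) (u w : G.V)
    (hw1 : w ≠ u) (hw2 : w ≠ G.pairing u)
    (hcut : ¬ G.CutDisconnects u w) :
    ∀ G' ∈ ({G.flip u w, G.flip u (G.pairing w)} : Set TGraph), ∀ c : Fin 3,
      |((G'.numFaces c : ℤ) - (G.numFaces c : ℤ))| ≤ 1 := by
  rintro G' (rfl | rfl) c
  · exact abs_numFaces_flip_sub_le_one G u w hw1 c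
  · refine abs_numFaces_flip_sub_le_one G u (G.pairing w) (fun h => hw2 ?_) c
    rw [← h, G.invol]
end

section
/- Among connected graphs of the tetrahedral model with an even number b of bubbles, the graphs maximizing the number of faces are exactly the melonic graphs, and they satisfy F(G) = (3/2)b + 3. -/
/-!  A combinatorial model of the Feynman graphs of the rank-3 tetrahedral
(`O(N)^3`) tensor model.

A graph consists of a finite set `B` of bubbles (copies of the tetrahedron
`K_4`); each bubble has four vertices, so the vertex set is `B × Fin 4`.
Inside every bubble the edges of colors `1,2,3` are given once and for all by
the three fixed-point-free involutions of `Fin 4` (the proper 3-edge-coloring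
of `K_4`).  The color-0 propagator edges, one per vertex, are encoded by a
fixed-point-free involution `pairing` of the vertex set. -/

open Equiv

open TGraph

open TGraph

namespace TGraph

open Module

/-- The `ZMod 2`-valued functions invariant under a permutation. -/
def invariants {X : Type*} (α : Equiv.Perm X) : Submodule (ZMod 2) (X → ZMod 2) where
  carrier := {f | ∀ x, f (α x) = f x}
  add_mem' := by
    intro f g hf hg x
    simp only [Pi.add_apply, hf x, hg x]
  zero_mem' := fun _ => rfl
  smul_mem' := by
    intro r f hf x
    simp only [Pi.smul_apply, hf x]

theorem apply_smul_of_mem_closure {X R : Type*} {S : Set (Equiv.Perm X)} {f : X → R}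
    (hf : ∀ α ∈ S, ∀ x, f (α x) = f x) {g : Equiv.Perm X} (hg : g ∈ Subgroup.closure S) :
    ∀ x, f (g x) = f x := by
  induction hg using Subgroup.closure_induction with
  | mem α hα => exact hf α hα
  | one => exact fun _ => rfl
  | mul a b _ _ ha hb => intro x; rw [Equiv.Perm.mul_apply, ha, hb]
  | inv a _ ha => intro x; simpa using (ha (a⁻¹ x)).symm

/-- The number of orbits of the group generated by two permutations is the dimension of the
space of functions invariant under both. -/
theorem card_orbits_eq_finrank {X : Type*} [Fintype X] (α β : Equiv.Perm X) :
    Nat.card (MulAction.orbitRel.Quotient (Subgroup.closure {α, β}) X) =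
      finrank (ZMod 2) ↥(invariants α ⊓ invariants β) := by
  classical
  let Γ := Subgroup.closure {α, β}
  let Q := MulAction.orbitRel.Quotient Γ X
  have : Fintype Q := Fintype.ofFinite Q
  let mk : X → Q := Quotient.mk (MulAction.orbitRel Γ X)
  have hmk : Function.Surjective mk := Quotient.mk_surjective
  let L := LinearMap.funLeft (ZMod 2) (ZMod 2) mk
  have hL : Function.Injective L := LinearMap.funLeft_injective_of_surjective _ _ _ hmk
  have hrange : LinearMap.range L = invariants α ⊓ invariants β := by
    ext f
    constructor
    · rintro ⟨g, rfl⟩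
      have key : ∀ γ ∈ ({α, β} : Set (Equiv.Perm X)), ∀ x, mk (γ x) = mk x := fun γ hγ x =>
        Quotient.sound ⟨⟨γ, Subgroup.subset_closure hγ⟩, rfl⟩
      exact ⟨fun x => congrArg g (key α (by simp) x), fun x => congrArg g (key β (by simp) x)⟩
    · rintro ⟨hα, hβ⟩
      have hinv : ∀ γ ∈ ({α, β} : Set (Equiv.Perm X)), ∀ x, f (γ x) = f x := by
        rintro γ (rfl | rfl)
        · exact hα
        · exact hβ
      refine ⟨Quotient.lift f ?_, rfl⟩
      rintro x y ⟨⟨g, hg⟩, rfl⟩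
      exact apply_smul_of_mem_closure hinv hg y
  rw [← hrange, LinearMap.finrank_range_of_inj hL, finrank_fintype_fun_eq_card,
    Nat.card_eq_fintype_card]

/-- The standard symmetric bilinear form on `ZMod 2`-valued functions. -/
def pairingForm (X : Type*) [Fintype X] : LinearMap.BilinForm (ZMod 2) (X → ZMod 2) :=
  dotProductBilin (ZMod 2) (ZMod 2)

theorem pairingForm_apply {X : Type*} [Fintype X] (f g : X → ZMod 2) :
    pairingForm X f g = ∑ x, f x * g x := rfl

theorem pairingForm_comm {X : Type*} [Fintype X] (f g : X → ZMod 2) :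
    pairingForm X f g = pairingForm X g f := by
  simp only [pairingForm_apply, mul_comm]

theorem pairingForm_isRefl (X : Type*) [Fintype X] : (pairingForm X).IsRefl := by
  intro f g h
  rw [pairingForm_comm, h]

theorem pairingForm_nondegenerate (X : Type*) [Fintype X] : (pairingForm X).Nondegenerate := by
  classical
  refine (LinearMap.IsRefl.nondegenerate_iff_separatingLeft (pairingForm_isRefl X)).2 ?_
  intro f hf
  ext x
  simpa [pairingForm_apply, Pi.single_apply] using hf (Pi.single x 1)

theorem mem_orthogonal_pairingForm {X : Type*} [Fintype X] {W : Submodule (ZMod 2) (X → ZMod 2)}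
    {g : X → ZMod 2} :
    g ∈ (pairingForm X).orthogonal W ↔ ∀ f ∈ W, ∑ x, f x * g x = 0 := Iff.rfl

theorem sum_eq_zero_of_mem_invariants {X : Type*} [Fintype X] {α : Equiv.Perm X}
    (hinv : ∀ x, α (α x) = x) (hfix : ∀ x, α x ≠ x) {f : X → ZMod 2} (hf : f ∈ invariants α) :
    ∑ x, f x = 0 :=
  Finset.sum_involution (fun x _ => α x) (fun x _ => by rw [hf x, CharTwo.add_self_eq_zero])
    (fun x _ _ => hfix x) (fun x _ => Finset.mem_univ _) (fun x _ => hinv x)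

theorem invariants_isotropic {X : Type*} [Fintype X] {α : Equiv.Perm X}
    (hinv : ∀ x, α (α x) = x) (hfix : ∀ x, α x ≠ x) {f g : X → ZMod 2} (hf : f ∈ invariants α)
    (hg : g ∈ invariants α) : ∑ x, f x * g x = 0 :=
  sum_eq_zero_of_mem_invariants hinv hfix (f := f * g) fun x => by
    simp only [Pi.mul_apply, hf x, hg x]

theorem card_le_two_mul_finrank_invariants {X : Type*} [Fintype X] {α : Equiv.Perm X}
    (hinv : ∀ x, α (α x) = x) :
    Fintype.card X ≤ 2 * finrank (ZMod 2) (invariants α) := by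
  let L : (X → ZMod 2) →ₗ[ZMod 2] (X → ZMod 2) :=
    LinearMap.id + LinearMap.funLeft (ZMod 2) (ZMod 2) α
  have hL : ∀ f x, L f x = f x + f (α x) := fun _ _ => rfl
  have hr : LinearMap.range L ≤ invariants α := by
    rintro _ ⟨f, rfl⟩ x
    rw [hL, hL, hinv, add_comm]
  have hk : LinearMap.ker L ≤ invariants α := by
    intro f hf x
    have h : f x + f (α x) = 0 := congrFun (LinearMap.mem_ker.1 hf) x
    exact (CharTwo.add_eq_zero.1 h).symm
  have h1 := Submodule.finrank_mono hr
  have h2 := Submodule.finrank_mono hk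
  have h3 := L.finrank_range_add_finrank_ker
  rw [finrank_fintype_fun_eq_card] at h3
  omega

section Isotropic

variable {X : Type*} [Fintype X] {U₁ U₂ U₃ : Submodule (ZMod 2) (X → ZMod 2)}

theorem inf_sup_inf_le_orthogonal
    (h₁ : ∀ f ∈ U₁, ∀ g ∈ U₁, ∑ x, f x * g x = 0)
    (h₂ : ∀ f ∈ U₂, ∀ g ∈ U₂, ∑ x, f x * g x = 0)
    (h₃ : ∀ f ∈ U₃, ∀ g ∈ U₃, ∑ x, f x * g x = 0) :
    U₁ ⊓ U₂ ⊔ U₁ ⊓ U₃ ≤ (pairingForm X).orthogonal (U₁ ⊔ U₂ ⊓ U₃) := by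
  refine sup_le ?_ ?_
  all_goals
    rintro g ⟨hg₁, hg⟩ f hf
    obtain ⟨a, ha, b, ⟨hb₂, hb₃⟩, rfl⟩ := Submodule.mem_sup.1 hf
    change pairingForm X (a + b) g = 0
    rw [map_add, LinearMap.add_apply]
  · exact (congrArg₂ (· + ·) (h₁ a ha g hg₁) (h₂ b hb₂ g hg)).trans (add_zero 0)
  · exact (congrArg₂ (· + ·) (h₁ a ha g hg₁) (h₃ b hb₃ g hg)).trans (add_zero 0)

theorem finrank_inf_sup_inf (U₁ U₂ U₃ : Submodule (ZMod 2) (X → ZMod 2)) :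
    finrank (ZMod 2) ↥(U₁ ⊓ U₂ ⊔ U₁ ⊓ U₃) + finrank (ZMod 2) ↥(U₁ ⊓ U₂ ⊓ U₃) =
      finrank (ZMod 2) ↥(U₁ ⊓ U₂) + finrank (ZMod 2) ↥(U₁ ⊓ U₃) := by
  rw [← Submodule.finrank_sup_add_finrank_inf_eq (U₁ ⊓ U₂) (U₁ ⊓ U₃), ← inf_inf_distrib_left,
    inf_assoc]

theorem finrank_sup_inf (U₁ U₂ U₃ : Submodule (ZMod 2) (X → ZMod 2)) :
    finrank (ZMod 2) ↥(U₁ ⊔ U₂ ⊓ U₃) + finrank (ZMod 2) ↥(U₁ ⊓ U₂ ⊓ U₃) =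
      finrank (ZMod 2) U₁ + finrank (ZMod 2) ↥(U₂ ⊓ U₃) := by
  rw [← Submodule.finrank_sup_add_finrank_inf_eq U₁ (U₂ ⊓ U₃), inf_assoc]

theorem finrank_orthogonal_pairingForm (W : Submodule (ZMod 2) (X → ZMod 2)) :
    finrank (ZMod 2) ((pairingForm X).orthogonal W) + finrank (ZMod 2) W = Fintype.card X := by
  have h1 := LinearMap.BilinForm.finrank_orthogonal (pairingForm_nondegenerate X) W
  have h2 := Submodule.finrank_le W
  rw [finrank_fintype_fun_eq_card] at h1 h2
  omega

theorem finrank_inf_add_le_of_isotropic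
    (h₁ : ∀ f ∈ U₁, ∀ g ∈ U₁, ∑ x, f x * g x = 0)
    (h₂ : ∀ f ∈ U₂, ∀ g ∈ U₂, ∑ x, f x * g x = 0)
    (h₃ : ∀ f ∈ U₃, ∀ g ∈ U₃, ∑ x, f x * g x = 0) :
    finrank (ZMod 2) ↥(U₁ ⊓ U₂) + finrank (ZMod 2) ↥(U₁ ⊓ U₃) + finrank (ZMod 2) U₁ +
      finrank (ZMod 2) ↥(U₂ ⊓ U₃) ≤
      Fintype.card X + 2 * finrank (ZMod 2) ↥(U₁ ⊓ U₂ ⊓ U₃) := by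
  have h := Submodule.finrank_mono (inf_sup_inf_le_orthogonal h₁ h₂ h₃)
  have ha := finrank_inf_sup_inf U₁ U₂ U₃
  have hb := finrank_sup_inf U₁ U₂ U₃
  have hc := finrank_orthogonal_pairingForm (U₁ ⊔ U₂ ⊓ U₃)
  omega

theorem orthogonal_sup_inf_eq_of_le
    (h₁ : ∀ f ∈ U₁, ∀ g ∈ U₁, ∑ x, f x * g x = 0)
    (h₂ : ∀ f ∈ U₂, ∀ g ∈ U₂, ∑ x, f x * g x = 0)
    (h₃ : ∀ f ∈ U₃, ∀ g ∈ U₃, ∑ x, f x * g x = 0)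
    (heq : Fintype.card X + 2 * finrank (ZMod 2) ↥(U₁ ⊓ U₂ ⊓ U₃) ≤
      finrank (ZMod 2) ↥(U₁ ⊓ U₂) + finrank (ZMod 2) ↥(U₁ ⊓ U₃) + finrank (ZMod 2) U₁ +
        finrank (ZMod 2) ↥(U₂ ⊓ U₃)) :
    (pairingForm X).orthogonal (U₁ ⊔ U₂ ⊓ U₃) = U₁ ⊓ U₂ ⊔ U₁ ⊓ U₃ := by
  refine (Submodule.eq_of_le_of_finrank_le (inf_sup_inf_le_orthogonal h₁ h₂ h₃) ?_).symm
  have ha := finrank_inf_sup_inf U₁ U₂ U₃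
  have hb := finrank_sup_inf U₁ U₂ U₃
  have hc := finrank_orthogonal_pairingForm (U₁ ⊔ U₂ ⊓ U₃)
  omega

theorem orthogonal_inf_sup_inf_eq_of_le
    (h₁ : ∀ f ∈ U₁, ∀ g ∈ U₁, ∑ x, f x * g x = 0)
    (h₂ : ∀ f ∈ U₂, ∀ g ∈ U₂, ∑ x, f x * g x = 0)
    (h₃ : ∀ f ∈ U₃, ∀ g ∈ U₃, ∑ x, f x * g x = 0)
    (heq : Fintype.card X + 2 * finrank (ZMod 2) ↥(U₁ ⊓ U₂ ⊓ U₃) ≤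
      finrank (ZMod 2) ↥(U₁ ⊓ U₂) + finrank (ZMod 2) ↥(U₁ ⊓ U₃) + finrank (ZMod 2) U₁ +
        finrank (ZMod 2) ↥(U₂ ⊓ U₃)) :
    (pairingForm X).orthogonal (U₁ ⊓ U₂ ⊔ U₁ ⊓ U₃) = U₁ ⊔ U₂ ⊓ U₃ := by
  rw [← orthogonal_sup_inf_eq_of_le h₁ h₂ h₃ heq, LinearMap.BilinForm.orthogonal_orthogonal
    (pairingForm_nondegenerate X) (pairingForm_isRefl X)]

end Isotropic

theorem bubblePerm_involutive : ∀ c k, bubblePerm c (bubblePerm c k) = k := by decide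

theorem bubblePerm_ne : ∀ c k, bubblePerm c k ≠ k := by decide

theorem bubblePerm_bubblePerm :
    ∀ a b c, a ≠ b → a ≠ c → b ≠ c → ∀ k, bubblePerm a (bubblePerm b k) = bubblePerm c k := by
  decide

theorem eq_or_eq_bubblePerm : ∀ k l, l = k ∨ ∃ c, l = bubblePerm c k := by decide

theorem eq_or_eq_or_eq_of_ne :
    ∀ a b c : Fin 3, a ≠ b → a ≠ c → b ≠ c → ∀ d, d = a ∨ d = b ∨ d = c := by decide

theorem exists_third_color : ∀ a b : Fin 3, a ≠ b → ∃ c, a ≠ c ∧ b ≠ c := by decide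

theorem exists_other_colors : ∀ c : Fin 3, ∃ a b, a ≠ b ∧ a ≠ c ∧ b ≠ c := by decide

variable (G : TGraph)

theorem colPerm_apply (c : Fin 3) (v : G.V) : G.colPerm c v = (v.1, bubblePerm c v.2) := rfl

theorem colPerm_involutive (c : Fin 3) (v : G.V) : G.colPerm c (G.colPerm c v) = v := by
  simp only [colPerm_apply, bubblePerm_involutive]

theorem colPerm_ne (c : Fin 3) (v : G.V) : G.colPerm c v ≠ v := fun h =>
  bubblePerm_ne c v.2 (congrArg Prod.snd h)

theorem colPerm_colPerm {a b c : Fin 3} (hab : a ≠ b) (hac : a ≠ c) (hbc : b ≠ c) (v : G.V) :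
    G.colPerm a (G.colPerm b v) = G.colPerm c v := by
  simp only [colPerm_apply, bubblePerm_bubblePerm a b c hab hac hbc]

theorem eq_or_eq_colPerm {u v : G.V} (h : u.1 = v.1) : u = v ∨ ∃ c, u = G.colPerm c v := by
  obtain ⟨β, k⟩ := u
  obtain ⟨γ, l⟩ := v
  obtain rfl : β = γ := h
  obtain rfl | ⟨c, rfl⟩ := eq_or_eq_bubblePerm l k
  · exact Or.inl rfl
  · exact Or.inr ⟨c, rfl⟩

theorem card_V : Fintype.card G.V = 4 * G.b := by
  rw [Fintype.card_prod, Fintype.card_fin, mul_comm, b]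

/-- The functions on the vertices which are invariant along the color-0 edges. -/
abbrev pairingInvariants : Submodule (ZMod 2) (G.V → ZMod 2) := invariants G.pairing

/-- The functions on the vertices which are invariant along the color-`c` edges. -/
abbrev colInvariants (c : Fin 3) : Submodule (ZMod 2) (G.V → ZMod 2) := invariants (G.colPerm c)

theorem numFaces_eq_finrank (c : Fin 3) :
    G.numFaces c = finrank (ZMod 2) ↥(G.pairingInvariants ⊓ G.colInvariants c) :=
  card_orbits_eq_finrank _ _

theorem pairing_isotropic :
    ∀ f ∈ G.pairingInvariants, ∀ g ∈ G.pairingInvariants, ∑ x, f x * g x = 0 :=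
  fun _ hf _ hg => invariants_isotropic G.invol G.fixfree hf hg

theorem colPerm_isotropic (c : Fin 3) :
    ∀ f ∈ G.colInvariants c, ∀ g ∈ G.colInvariants c, ∑ x, f x * g x = 0 :=
  fun _ hf _ hg => invariants_isotropic (G.colPerm_involutive c) (G.colPerm_ne c) hf hg

variable {G}

theorem invariant_colPerm_of_ne {R : Type*} {f : G.V → R} {a b : Fin 3} (hab : a ≠ b)
    (ha : ∀ x, f (G.colPerm a x) = f x) (hb : ∀ x, f (G.colPerm b x) = f x) (c : Fin 3) :
    ∀ x, f (G.colPerm c x) = f x := by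
  obtain ⟨d, had, hbd⟩ := exists_third_color a b hab
  obtain rfl | rfl | rfl := eq_or_eq_or_eq_of_ne a b d hab had hbd c
  · exact ha
  · exact hb
  · intro x
    rw [← G.colPerm_colPerm hab had hbd, ha, hb]

theorem apply_eq_of_fst_eq {R : Type*} {f : G.V → R}
    (hf : ∀ c x, f (G.colPerm c x) = f x) {u v : G.V} (h : u.1 = v.1) : f u = f v := by
  obtain rfl | ⟨c, rfl⟩ := G.eq_or_eq_colPerm h
  · rfl
  · exact hf c v

/-- A graph is connected exactly when the functions invariant along all edges are constant. -/
theorem connected_iff :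
    G.Connected ↔ ∀ f : G.V → ZMod 2, (∀ x, f (G.pairing x) = f x) →
      (∀ c x, f (G.colPerm c x) = f x) → ∀ u v, f u = f v := by
  classical
  constructor
  · intro h f hp hc u v
    obtain ⟨⟨g, hg⟩, rfl⟩ := h u v
    refine apply_smul_of_mem_closure ?_ hg v
    rintro γ (rfl | ⟨c, rfl⟩)
    · exact hp
    · exact hc c
  · intro h u v
    have horb : ∀ γ ∈ ({G.pairing} ∪ Set.range G.colPerm : Set (Equiv.Perm G.V)), ∀ x,
        γ x ∈ MulAction.orbit G.fullGroup v ↔ x ∈ MulAction.orbit G.fullGroup v := by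
      intro γ hγ x
      rw [← MulAction.orbit_eq_iff, ← MulAction.orbit_eq_iff]
      exact Eq.congr_left
        (MulAction.orbit_smul (⟨γ, Subgroup.subset_closure hγ⟩ : G.fullGroup) x)
    have := h (fun x => if x ∈ MulAction.orbit G.fullGroup v then 1 else 0)
      (fun x => by simp only [horb G.pairing (Or.inl rfl)])
      (fun c x => by simp only [horb (G.colPerm c) (Or.inr ⟨c, rfl⟩)]) u v
    by_contra hu
    simp [hu, MulAction.mem_orbit_self] at this

theorem finrank_inf_inf_le_one (hG : G.Connected) {a b : Fin 3} (hab : a ≠ b) :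
    finrank (ZMod 2)
      ↥(G.pairingInvariants ⊓ G.colInvariants a ⊓ G.colInvariants b) ≤ 1 := by
  have hle : G.pairingInvariants ⊓ G.colInvariants a ⊓ G.colInvariants b ≤
      Submodule.span (ZMod 2) {fun _ => 1} := by
    rintro f ⟨⟨hp, ha⟩, hb⟩
    have hconst := connected_iff.1 hG f hp (invariant_colPerm_of_ne hab ha hb)
    rcases isEmpty_or_nonempty G.V with hV | ⟨⟨v⟩⟩
    · rw [Subsingleton.elim f 0]
      exact Submodule.zero_mem _
    · refine Submodule.mem_span_singleton.2 ⟨f v, ?_⟩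
      ext u
      simp [hconst u v]
  exact (Submodule.finrank_mono hle).trans ((finrank_span_le_card _).trans (by simp))

theorem b_le_finrank (a b : Fin 3) :
    G.b ≤ finrank (ZMod 2) ↥(G.colInvariants a ⊓ G.colInvariants b) := by
  let L := LinearMap.funLeft (ZMod 2) (ZMod 2) (Prod.fst : G.V → G.B)
  have hL : Function.Injective L :=
    LinearMap.funLeft_injective_of_surjective _ _ _ Prod.fst_surjective
  have hr : LinearMap.range L ≤ G.colInvariants a ⊓ G.colInvariants b := by
    rintro _ ⟨f, rfl⟩
    exact ⟨fun _ => rfl, fun _ => rfl⟩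
  have h := Submodule.finrank_mono hr
  rwa [LinearMap.finrank_range_of_inj hL, finrank_fintype_fun_eq_card] at h

theorem numFaces_add_numFaces_le (hG : G.Connected) {a b : Fin 3} (hab : a ≠ b) :
    G.numFaces a + G.numFaces b ≤ G.b + 2 := by
  have h := finrank_inf_add_le_of_isotropic G.pairing_isotropic (G.colPerm_isotropic a)
    (G.colPerm_isotropic b)
  have h1 := finrank_inf_inf_le_one hG hab
  have h2 := b_le_finrank (G := G) a b
  have h3 : _ ≤ 2 * finrank (ZMod 2) G.pairingInvariants :=
    card_le_two_mul_finrank_invariants G.invol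
  rw [card_V] at h h3
  rw [numFaces_eq_finrank, numFaces_eq_finrank]
  omega

theorem F_eq : G.F = G.numFaces 0 + G.numFaces 1 + G.numFaces 2 := Fin.sum_univ_three _

theorem two_mul_F_le (hG : G.Connected) : 2 * G.F ≤ 3 * G.b + 6 := by
  have h01 := numFaces_add_numFaces_le hG (a := 0) (b := 1) (by decide)
  have h02 := numFaces_add_numFaces_le hG (a := 0) (b := 2) (by decide)
  have h12 := numFaces_add_numFaces_le hG (a := 1) (b := 2) (by decide)
  rw [F_eq]
  omega

theorem numFaces_add_numFaces_eq (hG : G.Connected) (hF : 2 * G.F = 3 * G.b + 6) {a b : Fin 3}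
    (hab : a ≠ b) : G.numFaces a + G.numFaces b = G.b + 2 := by
  have h01 := numFaces_add_numFaces_le hG (a := 0) (b := 1) (by decide)
  have h02 := numFaces_add_numFaces_le hG (a := 0) (b := 2) (by decide)
  have h12 := numFaces_add_numFaces_le hG (a := 1) (b := 2) (by decide)
  rw [F_eq] at hF
  fin_cases a <;> fin_cases b <;> simp at hab ⊢ <;> omega

theorem finrank_equality (hG : G.Connected) (hF : 2 * G.F = 3 * G.b + 6) {a b : Fin 3}
    (hab : a ≠ b) :
    Fintype.card G.V + 2 * finrank (ZMod 2)
        ↥(G.pairingInvariants ⊓ G.colInvariants a ⊓ G.colInvariants b) ≤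
      finrank (ZMod 2) ↥(G.pairingInvariants ⊓ G.colInvariants a) +
        finrank (ZMod 2) ↥(G.pairingInvariants ⊓ G.colInvariants b) +
        finrank (ZMod 2) G.pairingInvariants +
        finrank (ZMod 2) ↥(G.colInvariants a ⊓ G.colInvariants b) := by
  have h := numFaces_add_numFaces_eq hG hF hab
  have h1 := finrank_inf_inf_le_one hG hab
  have h2 := b_le_finrank (G := G) a b
  have h3 : _ ≤ 2 * finrank (ZMod 2) G.pairingInvariants :=
    card_le_two_mul_finrank_invariants G.invol
  rw [card_V] at h3 ⊢
  rw [numFaces_eq_finrank, numFaces_eq_finrank] at h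
  omega

end TGraph

namespace TGraph

open Module

section Involutions

variable {X : Type*}

theorem exists_flipped [Fintype X] {α : Equiv.Perm X} (hinv : ∀ x, α (α x) = x)
    (hfix : ∀ x, α x ≠ x) : ∃ t : X → ZMod 2, ∀ x, t (α x) = t x + 1 := by
  let e := Fintype.equivFin X
  refine ⟨fun x => if e x < e (α x) then 1 else 0, fun x => ?_⟩
  have hne : e (α x) ≠ e x := fun h => hfix x (e.injective h)
  simp only [hinv]
  rcases lt_or_gt_of_ne hne with h | h
  · simp [h, h.not_gt]
  · simp only [h, h.not_gt, if_true, if_false]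
    decide

theorem two_mul_card_flipped {α : Equiv.Perm X} (hinv : ∀ x, α (α x) = x)
    {s : X → ZMod 2} (hs : ∀ x, s (α x) = s x + 1) {O : Finset X}
    (hO : ∀ x ∈ O, α x ∈ O) : 2 * (O.filter (fun x => s x = 1)).card = O.card := by
  have h : (O.filter (fun x => s x = 1)).card = (O.filter (fun x => ¬ s x = 1)).card := by
    have h01 : ∀ z : ZMod 2, z = 1 ↔ ¬ z + 1 = 1 := by decide
    refine Finset.card_bij' (fun x _ => α x) (fun x _ => α x) ?_ ?_ (fun x _ => hinv x)
      (fun x _ => hinv x)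
    · intro x hx
      rw [Finset.mem_filter] at hx ⊢
      exact ⟨hO x hx.1, by rw [hs]; exact (h01 _).1 hx.2⟩
    · intro x hx
      rw [Finset.mem_filter] at hx ⊢
      refine ⟨hO x hx.1, (h01 _).2 ?_⟩
      rw [← hs, hinv]
      exact hx.2
  have := Finset.card_filter_add_card_filter_not (s := O) (fun x => s x = 1)
  omega

theorem even_card_of_fixfree {α : Equiv.Perm X} (hinv : ∀ x, α (α x) = x)
    (hfix : ∀ x, α x ≠ x) {O : Finset X} (hO : ∀ x ∈ O, α x ∈ O) : Even O.card := by
  have h : ∑ x ∈ O, (1 : ZMod 2) = 0 :=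
    Finset.sum_involution (fun x _ => α x) (fun x _ => by decide) (fun x _ _ => hfix x) hO
      (fun x _ => hinv x)
  rw [Finset.sum_const, nsmul_eq_mul, mul_one] at h
  exact (ZMod.natCast_eq_zero_iff_even).1 h

theorem sum_mul_eq_sum_mul_of_flipped [Fintype X] {α β : Equiv.Perm X}
    (hα : ∀ x, α (α x) = x) (hβ : ∀ x, β (β x) = x) {f s t : X → ZMod 2}
    (hfα : ∀ x, f (α x) = f x) (hfβ : ∀ x, f (β x) = f x)
    (hs : ∀ x, s (α x) = s x + 1) (ht : ∀ x, t (β x) = t x + 1) :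
    ∑ x, f x * s x = ∑ x, f x * t x := by
  classical
  have key : ∀ r : X → ZMod 2, ∑ x, f x * r x =
      (((Finset.univ.filter (fun x => f x = 1)).filter (fun x => r x = 1)).card : ZMod 2) := by
    intro r
    have hmul : ∀ z w : ZMod 2, z * w = if z = 1 ∧ w = 1 then 1 else 0 := by decide
    rw [Finset.filter_filter, ← Finset.sum_boole]
    exact Finset.sum_congr rfl fun x _ => hmul _ _
  have h1 := two_mul_card_flipped hα hs (O := Finset.univ.filter (fun x => f x = 1))
    (by simp [hfα])
  have h2 := two_mul_card_flipped hβ ht (O := Finset.univ.filter (fun x => f x = 1))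
    (by simp [hfβ])
  rw [key s, key t]
  congr 1
  omega

/-- If the orbits of two permutations are many, then one of them has few elements. -/
theorem exists_small_invariant [Fintype X] (α β : Equiv.Perm X) (n : ℕ)
    (hn : Fintype.card X <
      n * Nat.card (MulAction.orbitRel.Quotient (Subgroup.closure {α, β}) X)) :
    ∃ O : Finset X, O.Nonempty ∧ (∀ x ∈ O, α x ∈ O) ∧ (∀ x ∈ O, β x ∈ O) ∧ O.card < n := by
  classical
  let Γ := Subgroup.closure {α, β}
  let Q := MulAction.orbitRel.Quotient Γ X
  have : Fintype Q := Fintype.ofFinite Q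
  let mk : X → Q := Quotient.mk (MulAction.orbitRel Γ X)
  have hmk : Function.Surjective mk := Quotient.mk_surjective
  have key : ∀ γ ∈ ({α, β} : Set (Equiv.Perm X)), ∀ x, mk (γ x) = mk x := fun γ hγ x =>
    Quotient.sound ⟨⟨γ, Subgroup.subset_closure hγ⟩, rfl⟩
  by_contra! hcon
  have hle : ∀ q ∈ (Finset.univ : Finset Q),
      n ≤ ((Finset.univ : Finset X).filter (fun x => mk x = q)).card := by
    intro q _
    obtain ⟨x, rfl⟩ := hmk q
    refine hcon _ ⟨x, by simp⟩ ?_ ?_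
    · intro y hy
      simpa [key α (by simp)] using hy
    · intro y hy
      simpa [key β (by simp)] using hy
  have h1 := Finset.card_nsmul_le_sum _ _ _ hle
  have h2 := Finset.card_eq_sum_card_fiberwise (f := mk) (s := (Finset.univ : Finset X))
    (t := Finset.univ) (fun x _ => Finset.mem_univ _)
  rw [← h2, smul_eq_mul, Finset.card_univ, Finset.card_univ, mul_comm] at h1
  rw [Nat.card_eq_fintype_card] at hn
  exact absurd h1 (not_le.2 hn)

theorem apply_comp_apply_of_card_eq_four {α β : Equiv.Perm X}
    (hα : ∀ x, α (α x) = x) (hβ : ∀ x, β (β x) = x) (hα' : ∀ x, α x ≠ x) (hβ' : ∀ x, β x ≠ x)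
    {O : Finset X} (hOα : ∀ x ∈ O, α x ∈ O) (hOβ : ∀ x ∈ O, β x ∈ O) (hO : O.card = 4)
    {v : X} (hv : v ∈ O) (hne : α v ≠ β v) : α (β (α v)) = β v := by
  classical
  have hsub : ({v, α v, β v, β (α v)} : Finset X) = O := by
    refine Finset.eq_of_subset_of_card_le ?_ ?_
    · intro x hx
      simp only [Finset.mem_insert, Finset.mem_singleton] at hx
      rcases hx with rfl | rfl | rfl | rfl
      exacts [hv, hOα _ hv, hOβ _ hv, hOβ _ (hOα _ hv)]
    · have h1 : v ≠ β (α v) := fun h => hne (by conv_rhs => rw [h, hβ])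
      rw [hO, Finset.card_insert_of_notMem, Finset.card_insert_of_notMem,
        Finset.card_insert_of_notMem, Finset.card_singleton]
      · simpa using fun h => hα' v h.symm
      · simpa using ⟨hne, fun h => hβ' _ h.symm⟩
      · simpa using ⟨fun h => hα' v h.symm, fun h => hβ' v h.symm, h1⟩
  have hmem : α (β (α v)) ∈ O := hOα _ (hOβ _ (hOα _ hv))
  rw [← hsub] at hmem
  simp only [Finset.mem_insert, Finset.mem_singleton] at hmem
  rcases hmem with h | h | h | h
  · exact absurd (by rw [← hα (β (α v)), h]) (hβ' (α v))
  · have h' := congrArg β (α.injective h)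
    rw [hβ] at h'
    exact absurd h' hne
  · exact h
  · exact absurd h (hα' _)

end Involutions

theorem exists_bubble_sign : ∀ a b, a ≠ b → ∃ s : Fin 4 → ZMod 2,
    ∀ k, s (bubblePerm a k) = s k + 1 ∧ s (bubblePerm b k) = s k + 1 := by
  decide

variable {G : TGraph}

/-- A connected graph which attains the bound on the number of faces. -/
def IsExtremal (G : TGraph) : Prop := G.Connected ∧ 2 * G.F = 3 * G.b + 6

theorem IsExtremal.exists_sign (hG : G.IsExtremal) (c : Fin 3) :
    ∃ σ : G.V → ZMod 2, (∀ v, σ (G.pairing v) = σ v + 1) ∧ ∀ v, σ (G.colPerm c v) = σ v := by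
  obtain ⟨a, b, hab, hac, hbc⟩ := exists_other_colors c
  obtain ⟨s, hs⟩ := exists_bubble_sign a b hab
  obtain ⟨t, ht⟩ := exists_flipped G.invol G.fixfree
  have hmem : (fun v : G.V => s v.2 + t v) ∈ (pairingForm G.V).orthogonal
      (G.pairingInvariants ⊓ G.colInvariants a ⊔ G.pairingInvariants ⊓ G.colInvariants b) := by
    have main : ∀ d, (∀ k, s (bubblePerm d k) = s k + 1) → ∀ f ∈ G.pairingInvariants ⊓
        G.colInvariants d, ∑ v, f v * (s v.2 + t v) = 0 := by
      intro d hd f hf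
      have := sum_mul_eq_sum_mul_of_flipped (α := G.colPerm d) (s := fun v : G.V => s v.2)
        (G.colPerm_involutive d) G.invol hf.2 hf.1 (fun v => hd v.2) ht
      simp only [mul_add, Finset.sum_add_distrib]
      rw [this, CharTwo.add_self_eq_zero]
    rw [mem_orthogonal_pairingForm]
    intro f hf
    obtain ⟨f₁, h₁, f₂, h₂, rfl⟩ := Submodule.mem_sup.1 hf
    simp only [Pi.add_apply, add_mul, Finset.sum_add_distrib]
    rw [← main a (fun k => (hs k).1) f₁ h₁, main b (fun k => (hs k).2) f₂ h₂, add_zero]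
  rw [orthogonal_inf_sup_inf_eq_of_le G.pairing_isotropic (G.colPerm_isotropic a)
    (G.colPerm_isotropic b) (finrank_equality hG.1 hG.2 hab)] at hmem
  obtain ⟨u, hu, f, ⟨hfa, hfb⟩, huf⟩ := Submodule.mem_sup.1 hmem
  have hσ : ∀ v, s v.2 + f v = t v + u v := by
    intro v
    have h : u v + f v = s v.2 + t v := congrFun huf v
    linear_combination (norm := skip) h
    ring_nf
    reduce_mod_char
  refine ⟨fun v => t v + u v, fun v => ?_, fun v => ?_⟩
  · simp only [ht v, hu v]
    ring
  · have key : ∀ d, (∀ k, s (bubblePerm d k) = s k + 1) → f ∈ G.colInvariants d →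
        ∀ v, t (G.colPerm d v) + u (G.colPerm d v) = t v + u v + 1 := by
      intro d hd hf v
      have hd' : s (G.colPerm d v).2 = s v.2 + 1 := hd v.2
      rw [← hσ, ← hσ, hf v, hd']
      ring
    change t (G.colPerm c v) + u (G.colPerm c v) = t v + u v
    rw [← G.colPerm_colPerm hab hac hbc, key a (fun k => (hs k).1) hfa,
      key b (fun k => (hs k).2) hfb, add_assoc, CharTwo.add_self_eq_zero, add_zero]

theorem IsExtremal.pairing_ne_colPerm (hG : G.IsExtremal) (c : Fin 3) (v : G.V) :
    G.pairing v ≠ G.colPerm c v := by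
  intro h
  obtain ⟨σ, hp, hc⟩ := hG.exists_sign c
  have := hp v
  rw [h, hc] at this
  simp at this

theorem IsExtremal.pairing_fst_ne (hG : G.IsExtremal) (v : G.V) : (G.pairing v).1 ≠ v.1 := by
  intro h
  obtain h | ⟨c, h⟩ := G.eq_or_eq_colPerm h
  · exact G.fixfree v h
  · exact hG.pairing_ne_colPerm c v h

theorem IsExtremal.exists_face_length_two (hG : G.IsExtremal) :
    ∃ c v, G.pairing (G.colPerm c (G.pairing v)) = G.colPerm c v := by
  have hc : ∃ c, 4 * G.b < 8 * G.numFaces c := by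
    by_contra! h
    have h0 := h 0
    have h1 := h 1
    have h2 := h 2
    have h3 := hG.2
    rw [F_eq] at h3
    omega
  obtain ⟨c, hc⟩ := hc
  rw [← card_V] at hc
  obtain ⟨O, ⟨v, hv⟩, hOp, hOc, hcard⟩ :=
    exists_small_invariant (X := G.V) G.pairing (G.colPerm c) 8 hc
  obtain ⟨σ, hσp, hσc⟩ := hG.exists_sign c
  have h1 := two_mul_card_flipped (X := G.V) G.invol hσp hOp
  obtain ⟨m, hm⟩ := even_card_of_fixfree (G.colPerm_involutive c) (G.colPerm_ne c)
    (O := O.filter (fun x => σ x = 1)) (by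
      intro x hx
      rw [Finset.mem_filter] at hx ⊢
      exact ⟨hOc x hx.1, by rw [hσc, hx.2]⟩)
  have hpos : 0 < O.card := Finset.card_pos.2 ⟨v, hv⟩
  exact ⟨c, v, apply_comp_apply_of_card_eq_four G.invol (G.colPerm_involutive c) G.fixfree
    (G.colPerm_ne c) hOp hOc (by omega) hv (hG.pairing_ne_colPerm c v)⟩

/-- The two strands of a face of length two separate an extremal graph: the resulting regions
on both sides of the color-0 edges are recorded by the two functions. -/
theorem IsExtremal.exists_regions (hG : G.IsExtremal) {a b c : Fin 3} (hab : a ≠ b)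
    {x : G.V} (hx : G.pairing (G.colPerm c (G.pairing x)) = G.colPerm c x) :
    ∃ f ∈ G.pairingInvariants ⊓ G.colInvariants a, ∃ g ∈ G.pairingInvariants ⊓ G.colInvariants b,
      f x = g x + 1 ∧ f (G.colPerm c x) = g (G.colPerm c x) + 1 ∧
      ∀ v, v ≠ x → v ≠ G.pairing x → v ≠ G.colPerm c x → v ≠ G.colPerm c (G.pairing x) →
        f v = g v := by
  classical
  have hx' : G.pairing (G.colPerm c x) = G.colPerm c (G.pairing x) := by rw [← hx, G.invol]
  have hne := hG.pairing_ne_colPerm c x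
  have hne' : x ≠ G.colPerm c (G.pairing x) := fun h => hne (by
    conv_rhs => rw [h, colPerm_involutive])
  let h : G.V → ZMod 2 := fun v => if v = x ∨ v = G.pairing x ∨ v = G.colPerm c x ∨
    v = G.colPerm c (G.pairing x) then 1 else 0
  have hp : ∀ v, h (G.pairing v) = h v := by
    intro v
    have h1 : ∀ w, G.pairing v = w ↔ v = G.pairing w := fun w =>
      ⟨fun e => by rw [← e, G.invol], fun e => by rw [e, G.invol]⟩
    simp only [h, h1, G.invol, hx, hx']
    congr 1
    apply propext
    tauto
  have hsum : ∀ f : G.V → ZMod 2, ∑ v, f v * h v =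
      f x + f (G.pairing x) + f (G.colPerm c x) + f (G.colPerm c (G.pairing x)) := by
    intro f
    have hset : (Finset.univ.filter fun v => v = x ∨ v = G.pairing x ∨ v = G.colPerm c x ∨
        v = G.colPerm c (G.pairing x)) =
        {x, G.pairing x, G.colPerm c x, G.colPerm c (G.pairing x)} := by
      ext v
      simp
    simp only [h, mul_ite, mul_one, mul_zero]
    rw [← Finset.sum_filter, hset, Finset.sum_insert, Finset.sum_insert, Finset.sum_insert,
      Finset.sum_singleton]
    · ring
    · simpa using (G.fixfree x).symm
    · simpa using ⟨hne, (G.colPerm_ne c _).symm⟩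
    · simpa using ⟨(G.fixfree x).symm, (G.colPerm_ne c x).symm, hne'⟩
  have hmem : h ∈ (pairingForm G.V).orthogonal
      (G.pairingInvariants ⊔ G.colInvariants a ⊓ G.colInvariants b) := by
    rw [mem_orthogonal_pairingForm]
    intro f hf
    obtain ⟨f₁, h₁, f₂, ⟨h₂, h₃⟩, rfl⟩ := Submodule.mem_sup.1 hf
    have e₁ := G.pairing_isotropic f₁ h₁ h hp
    have hc := invariant_colPerm_of_ne hab h₂ h₃ c
    simp only [Pi.add_apply, add_mul, Finset.sum_add_distrib]
    rw [e₁, hsum f₂, hc, hc, zero_add, add_assoc, CharTwo.add_self_eq_zero]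
  rw [orthogonal_sup_inf_eq_of_le G.pairing_isotropic (G.colPerm_isotropic a)
    (G.colPerm_isotropic b) (finrank_equality hG.1 hG.2 hab)] at hmem
  obtain ⟨f, hf, g, hg, hfg⟩ := Submodule.mem_sup.1 hmem
  have hval : ∀ v, f v = g v + h v := by
    intro v
    have h1 : f v + g v = h v := congrFun hfg v
    rw [← h1, add_comm (f v), ← add_assoc, CharTwo.add_self_eq_zero, zero_add]
  refine ⟨f, hf, g, hg, ?_, ?_, ?_⟩
  · rw [hval]; simp [h]
  · rw [hval]; simp [h]
  · intro v h1 h2 h3 h4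
    rw [hval]; simp [h, h1, h2, h3, h4]

end TGraph

namespace TGraph

open Module

/-- `G` is obtained by gluing `H` and `K`, embedded by `i` and `j`, along the color-0 edges
through `p` and `q`. -/
structure IsGluing (G H K : TGraph) (i : H.V → G.V) (j : K.V → G.V) (p : H.V) (q : K.V) :
    Prop where
  left_injective : Function.Injective i
  right_injective : Function.Injective j
  left_ne_right : ∀ x y, i x ≠ j y
  cover : ∀ z, (∃ x, i x = z) ∨ ∃ y, j y = z
  left_colPerm : ∀ c x, i (H.colPerm c x) = G.colPerm c (i x)
  right_colPerm : ∀ c y, j (K.colPerm c y) = G.colPerm c (j y)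
  pairing_root : G.pairing (i p) = j q
  pairing_root' : G.pairing (i (H.pairing p)) = j (K.pairing q)
  left_pairing : ∀ x, x ≠ p → x ≠ H.pairing p → G.pairing (i x) = i (H.pairing x)
  right_pairing : ∀ y, y ≠ q → y ≠ K.pairing q → G.pairing (j y) = j (K.pairing y)

namespace IsGluing

variable {G H K : TGraph} {i : H.V → G.V} {j : K.V → G.V} {p : H.V} {q : K.V}

theorem symm (h : IsGluing G H K i j p q) : IsGluing G K H j i q p where
  left_injective := h.right_injective
  right_injective := h.left_injective
  left_ne_right x y e := h.left_ne_right y x e.symm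
  cover z := (h.cover z).symm
  left_colPerm := h.right_colPerm
  right_colPerm := h.left_colPerm
  pairing_root := by rw [← h.pairing_root, G.invol]
  pairing_root' := by rw [← h.pairing_root', G.invol]
  left_pairing := h.right_pairing
  right_pairing := h.left_pairing

theorem sumElim_bijective (h : IsGluing G H K i j p q) :
    Function.Bijective (Sum.elim i j) := by
  refine ⟨h.left_injective.sumElim h.right_injective h.left_ne_right, fun z => ?_⟩
  rcases h.cover z with ⟨x, rfl⟩ | ⟨y, rfl⟩
  · exact ⟨Sum.inl x, rfl⟩
  · exact ⟨Sum.inr y, rfl⟩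

theorem b_eq (h : IsGluing G H K i j p q) : G.b = H.b + K.b := by
  have e := Fintype.card_of_bijective h.sumElim_bijective
  rw [Fintype.card_sum, card_V, card_V, card_V] at e
  omega

theorem exists_extend {R : Type*} (h : IsGluing G H K i j p q) (f : H.V → R) (g : K.V → R) :
    ∃ F : G.V → R, (∀ x, F (i x) = f x) ∧ ∀ y, F (j y) = g y := by
  let e := Equiv.ofBijective _ h.sumElim_bijective
  refine ⟨fun z => Sum.elim f g (e.symm z), fun x => ?_, fun y => ?_⟩
  · have hx : e.symm (i x) = Sum.inl x := e.symm_apply_eq.2 rfl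
    simp only [hx, Sum.elim_inl]
  · have hy : e.symm (j y) = Sum.inr y := e.symm_apply_eq.2 rfl
    simp only [hy, Sum.elim_inr]

theorem extend_pairing {R : Type*} (h : IsGluing G H K i j p q) {f : H.V → R} {F : G.V → R}
    (hf : ∀ x, f (H.pairing x) = f x) (hF : ∀ x, F (i x) = f x) (hpq : F (i p) = F (j q))
    (hq : F (j (K.pairing q)) = F (j q)) (x : H.V) : F (G.pairing (i x)) = F (i x) := by
  by_cases h1 : x = p
  · rw [h1, h.pairing_root, hpq]
  by_cases h2 : x = H.pairing p
  · rw [h2, h.pairing_root', hq, ← hpq, hF, hF, hf]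
  rw [h.left_pairing x h1 h2, hF, hF, hf]

theorem extend_invariant {R : Type*} (h : IsGluing G H K i j p q) {f : H.V → R} {g : K.V → R}
    {F : G.V → R} (hf : ∀ x, f (H.pairing x) = f x) (hg : ∀ y, g (K.pairing y) = g y)
    (hFf : ∀ x, F (i x) = f x) (hFg : ∀ y, F (j y) = g y) (hpq : f p = g q) (z : G.V) :
    F (G.pairing z) = F z := by
  have hpq' : F (i p) = F (j q) := by rw [hFf, hFg, hpq]
  rcases h.cover z with ⟨x, rfl⟩ | ⟨y, rfl⟩
  · exact h.extend_pairing hf hFf hpq' (by rw [hFg, hFg, hg]) x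
  · exact h.symm.extend_pairing hg hFg hpq'.symm (by rw [hFf, hFf, hf]) y

theorem extend_colPerm {R : Type*} (h : IsGluing G H K i j p q) {f : H.V → R} {g : K.V → R}
    {F : G.V → R} {c : Fin 3} (hf : ∀ x, f (H.colPerm c x) = f x)
    (hg : ∀ y, g (K.colPerm c y) = g y)
    (hFf : ∀ x, F (i x) = f x) (hFg : ∀ y, F (j y) = g y) (z : G.V) :
    F (G.colPerm c z) = F z := by
  rcases h.cover z with ⟨x, rfl⟩ | ⟨y, rfl⟩
  · rw [← h.left_colPerm, hFf, hFf, hf]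
  · rw [← h.right_colPerm, hFg, hFg, hg]

/-- The face of color `c` through one of the glued edges contains both edges. -/
theorem apply_root (h : IsGluing G H K i j p q) {c : Fin 3} {f : G.V → ZMod 2}
    (hp : f ∈ G.pairingInvariants) (hc : f ∈ G.colInvariants c) :
    f (i (H.pairing p)) = f (i p) := by
  classical
  let d := f (i p) + f (i (H.pairing p))
  have hsum : ∑ x, f (i x) = 0 :=
    sum_eq_zero_of_mem_invariants (H.colPerm_involutive c) (H.colPerm_ne c)
      (f := fun x => f (i x)) fun x => by simp only [h.left_colPerm, hc (i x)]
  have hsum' : ∑ x, (f (i x) + if x = p then d else 0) = 0 := by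
    refine sum_eq_zero_of_mem_invariants H.invol H.fixfree
      (f := fun x => f (i x) + if x = p then d else 0) fun x => ?_
    by_cases h1 : x = p
    · subst h1
      simp only [H.fixfree x, if_true, if_false, d]
      rw [← add_assoc, CharTwo.add_self_eq_zero, zero_add, add_zero]
    by_cases h2 : x = H.pairing p
    · subst h2
      simp only [H.fixfree p, H.invol, if_true, if_false, d]
      rw [← add_assoc, CharTwo.add_self_eq_zero, zero_add, add_zero]
    have h3 : H.pairing x ≠ p := fun e => h2 (by rw [← e, H.invol])
    simp only [h1, h3, if_false, ← h.left_pairing x h1 h2, hp (i x)]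
  rw [Finset.sum_add_distrib, hsum, Finset.sum_ite_eq' Finset.univ p, zero_add] at hsum'
  exact (CharTwo.add_eq_zero.1 (by simpa using hsum')).symm

theorem comp_left_mem (h : IsGluing G H K i j p q) {c : Fin 3} {f : G.V → ZMod 2}
    (hp : f ∈ G.pairingInvariants) (hc : f ∈ G.colInvariants c) :
    (fun x => f (i x)) ∈ H.pairingInvariants ⊓ H.colInvariants c := by
  refine ⟨fun x => ?_, fun x => ?_⟩
  · by_cases h1 : x = p
    · simp only [h1, h.apply_root hp hc]
    by_cases h2 : x = H.pairing p
    · simp only [h2, H.invol, h.apply_root hp hc]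
    simp only [← h.left_pairing x h1 h2, hp (i x)]
  · simp only [h.left_colPerm, hc (i x)]

theorem numFaces_add_one (h : IsGluing G H K i j p q) (c : Fin 3) :
    G.numFaces c + 1 = H.numFaces c + K.numFaces c := by
  rw [numFaces_eq_finrank, numFaces_eq_finrank, numFaces_eq_finrank]
  let L : ↥(G.pairingInvariants ⊓ G.colInvariants c) →ₗ[ZMod 2]
      ↥(H.pairingInvariants ⊓ H.colInvariants c) × ↥(K.pairingInvariants ⊓ K.colInvariants c) :=
    ((LinearMap.funLeft (ZMod 2) (ZMod 2) i).restrict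
      (fun f (hf : f ∈ G.pairingInvariants ⊓ G.colInvariants c) =>
        h.comp_left_mem hf.1 hf.2)).prod
    ((LinearMap.funLeft (ZMod 2) (ZMod 2) j).restrict
      (fun f (hf : f ∈ G.pairingInvariants ⊓ G.colInvariants c) =>
        h.symm.comp_left_mem hf.1 hf.2))
  let D : ↥(H.pairingInvariants ⊓ H.colInvariants c) × ↥(K.pairingInvariants ⊓ K.colInvariants c)
      →ₗ[ZMod 2] ZMod 2 :=
    ((LinearMap.proj p).comp (Submodule.subtype _)).coprod
      ((LinearMap.proj q).comp (Submodule.subtype _))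
  have hL : Function.Injective L := by
    rintro ⟨f, hf⟩ ⟨g, hg⟩ e
    have e1 : ∀ x, f (i x) = g (i x) := fun x =>
      congrFun (congrArg Subtype.val (congrArg Prod.fst e)) x
    have e2 : ∀ y, f (j y) = g (j y) := fun y =>
      congrFun (congrArg Subtype.val (congrArg Prod.snd e)) y
    refine Subtype.ext (funext fun z => ?_)
    rcases h.cover z with ⟨x, rfl⟩ | ⟨y, rfl⟩
    exacts [e1 x, e2 y]
  have hD : Function.Surjective D := by
    intro r
    refine ⟨(⟨fun _ => r, fun _ => rfl, fun _ => rfl⟩, 0), ?_⟩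
    exact add_zero r
  have hker : LinearMap.range L = LinearMap.ker D := by
    ext ⟨⟨f, hf⟩, ⟨g, hg⟩⟩
    constructor
    · rintro ⟨⟨F, hF⟩, e⟩
      have e1 : F (i p) = f p := congrFun (congrArg Subtype.val (congrArg Prod.fst e)) p
      have e2 : F (j q) = g q := congrFun (congrArg Subtype.val (congrArg Prod.snd e)) q
      change f p + g q = 0
      rw [← e1, ← e2, ← h.pairing_root, hF.1, CharTwo.add_self_eq_zero]
    · intro e
      have hpq : f p = g q := CharTwo.add_eq_zero.1 e
      obtain ⟨F, hFf, hFg⟩ := h.exists_extend f g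
      refine ⟨⟨F, h.extend_invariant hf.1 hg.1 hFf hFg hpq, h.extend_colPerm hf.2 hg.2 hFf hFg⟩,
        ?_⟩
      exact Prod.ext (Subtype.ext (funext hFf)) (Subtype.ext (funext hFg))
  have h1 := D.finrank_range_add_finrank_ker
  rw [LinearMap.range_eq_top.2 hD, finrank_top, finrank_self, ← hker,
    LinearMap.finrank_range_of_inj hL, finrank_prod] at h1
  omega

theorem F_add_three (h : IsGluing G H K i j p q) : G.F + 3 = H.F + K.F := by
  have h0 := h.numFaces_add_one 0
  have h1 := h.numFaces_add_one 1
  have h2 := h.numFaces_add_one 2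
  rw [F_eq, F_eq, F_eq]
  omega

theorem connected (h : IsGluing G H K i j p q) (hH : H.Connected) (hK : K.Connected) :
    G.Connected := by
  rw [connected_iff] at hH hK ⊢
  intro f hp hc
  have hH' := hH (fun x => f (i x)) (h.comp_left_mem hp (hc 0)).1
    (fun c => (h.comp_left_mem hp (hc c)).2)
  have hK' := hK (fun x => f (j x)) (h.symm.comp_left_mem hp (hc 0)).1
    (fun c => (h.symm.comp_left_mem hp (hc c)).2)
  have key : ∀ z, f z = f (i p) := by
    intro z
    rcases h.cover z with ⟨x, rfl⟩ | ⟨y, rfl⟩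
    · exact hH' x p
    · rw [← hp (i p), h.pairing_root]
      exact hK' y q
  intro u v
  rw [key u, key v]

theorem connected_left (h : IsGluing G H K i j p q) (hG : G.Connected) : H.Connected := by
  rw [connected_iff] at hG ⊢
  intro f hp hc u v
  obtain ⟨F, hFf, hFg⟩ := h.exists_extend f (fun _ => f p)
  rw [← hFf, ← hFf]
  exact hG F (h.extend_invariant hp (fun _ => rfl) hFf hFg rfl)
    (fun c => h.extend_colPerm (hc c) (fun _ => rfl) hFf hFg) _ _

/-- The graph obtained from two glued pieces is extremal only if both pieces are. -/
theorem isExtremal_left (h : IsGluing G H K i j p q) (hG : G.IsExtremal) : H.IsExtremal := by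
  have h1 := h.connected_left hG.1
  have h2 := two_mul_F_le (h.symm.connected_left hG.1)
  have h3 := two_mul_F_le h1
  have h4 := h.F_add_three
  have h5 := h.b_eq
  have h6 := hG.2
  exact ⟨h1, by omega⟩

end IsGluing

/-- The set `S` of bubbles is joined to its complement by exactly the two color-0 edges through
the vertices `u` and `w` of `S`. -/
structure IsCut (G : TGraph) (S : Set G.B) (u w : G.V) : Prop where
  left_mem : u.1 ∈ S
  right_mem : w.1 ∈ S
  ne : u ≠ w
  pairing_left_notMem : (G.pairing u).1 ∉ S
  pairing_right_notMem : (G.pairing w).1 ∉ S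
  pairing_mem : ∀ v : G.V, v.1 ∈ S → v ≠ u → v ≠ w → (G.pairing v).1 ∈ S

section Restrict

variable {G : TGraph} {S : Set G.B} {u w : G.V}

theorem IsCut.compl (h : G.IsCut S u w) : G.IsCut Sᶜ (G.pairing u) (G.pairing w) where
  left_mem := h.pairing_left_notMem
  right_mem := h.pairing_right_notMem
  ne e := h.ne (G.pairing.injective e)
  pairing_left_notMem := by simpa [G.invol] using h.left_mem
  pairing_right_notMem := by simpa [G.invol] using h.right_mem
  pairing_mem v hv hu hw hmem := hv (by
    rw [← G.invol v]
    exact h.pairing_mem _ hmem (fun e => hu (by rw [← e, G.invol]))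
      (fun e => hw (by rw [← e, G.invol])))

open Classical in
/-- The pairing of `G` modified so that `u` is joined to `w`. -/
noncomputable def closeFun (G : TGraph) (u w : G.V) (v : G.V) : G.V :=
  if v = u then w else if v = w then u else G.pairing v

theorem IsCut.closeFun_mem (h : G.IsCut S u w) {v : G.V} (hv : v.1 ∈ S) :
    (G.closeFun u w v).1 ∈ S := by
  unfold closeFun
  split_ifs with h1 h2
  exacts [h.right_mem, h.left_mem, h.pairing_mem v hv h1 h2]

theorem IsCut.closeFun_closeFun (h : G.IsCut S u w) {v : G.V} (hv : v.1 ∈ S) :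
    G.closeFun u w (G.closeFun u w v) = v := by
  by_cases h1 : v = u
  · simp [closeFun, h1, h.ne.symm]
  by_cases h2 : v = w
  · simp [closeFun, h2, h.ne.symm]
  have h3 : G.pairing v ≠ u := fun e => h.pairing_left_notMem (by rwa [← e, G.invol])
  have h4 : G.pairing v ≠ w := fun e => h.pairing_right_notMem (by rwa [← e, G.invol])
  simp [closeFun, h1, h2, h3, h4, G.invol]

theorem IsCut.closeFun_ne (h : G.IsCut S u w) (v : G.V) : G.closeFun u w v ≠ v := by
  unfold closeFun
  split_ifs with h1 h2
  · rw [h1]; exact h.ne.symm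
  · rw [h2]; exact h.ne
  · exact G.fixfree v

/-- One side of a cut, closed by joining its two external vertices. -/
noncomputable def IsCut.restrict (h : G.IsCut S u w) : TGraph where
  B := {β : G.B // β ∈ S}
  fintypeB := Fintype.ofFinite _
  decB := Classical.decEq _
  pairing := Function.Involutive.toPerm
    (fun v => (⟨(G.closeFun u w (v.1, v.2)).1, h.closeFun_mem v.1.2⟩,
      (G.closeFun u w (v.1, v.2)).2))
    (fun v => by
      have e := h.closeFun_closeFun (v := (v.1.1, v.2)) v.1.2
      have e₁ := congrArg Prod.fst e
      have e₂ := congrArg Prod.snd e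
      exact Prod.ext (Subtype.ext e₁) e₂)
  invol := fun v => Function.Involutive.toPerm_involutive _ v
  fixfree := fun v e => by
    have e₁ := congrArg Subtype.val (congrArg Prod.fst e)
    have e₂ := congrArg Prod.snd e
    exact h.closeFun_ne (v.1.1, v.2) (Prod.ext e₁ e₂)

/-- The inclusion of the vertices of one side of a cut. -/
def IsCut.incl (h : G.IsCut S u w) (v : h.restrict.V) : G.V :=
  (Subtype.val (p := fun β => β ∈ S) v.1, v.2)

/-- A vertex of `G`, viewed in one side of a cut. -/
def IsCut.lift (h : G.IsCut S u w) (v : G.V) (hv : v.1 ∈ S) : h.restrict.V :=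
  ((⟨v.1, hv⟩ : {β : G.B // β ∈ S}), v.2)

theorem IsCut.incl_lift (h : G.IsCut S u w) (v : G.V) (hv : v.1 ∈ S) : h.incl (h.lift v hv) = v :=
  rfl

theorem IsCut.incl_injective (h : G.IsCut S u w) : Function.Injective h.incl := by
  intro x y e
  have e₁ := congrArg Prod.fst e
  have e₂ := congrArg Prod.snd e
  exact Prod.ext (Subtype.ext e₁) e₂

theorem IsCut.incl_mem (h : G.IsCut S u w) (v : h.restrict.V) : (h.incl v).1 ∈ S :=
  Subtype.property (p := fun β => β ∈ S) v.1

theorem IsCut.incl_colPerm (h : G.IsCut S u w) (c : Fin 3) (v : h.restrict.V) :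
    h.incl (h.restrict.colPerm c v) = G.colPerm c (h.incl v) := rfl

theorem IsCut.incl_pairing (h : G.IsCut S u w) (v : h.restrict.V) :
    h.incl (h.restrict.pairing v) = G.closeFun u w (h.incl v) := rfl

theorem IsCut.pairing_lift_left (h : G.IsCut S u w) :
    h.restrict.pairing (h.lift u h.left_mem) = h.lift w h.right_mem :=
  h.incl_injective (by rw [incl_pairing, incl_lift, incl_lift, closeFun, if_pos rfl])

theorem IsCut.pairing_incl (h : G.IsCut S u w) (v : h.restrict.V)
    (hu : v ≠ h.lift u h.left_mem) (hw : v ≠ h.restrict.pairing (h.lift u h.left_mem)) :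
    G.pairing (h.incl v) = h.incl (h.restrict.pairing v) := by
  rw [h.pairing_lift_left] at hw
  have hu' : h.incl v ≠ u := fun e => hu (h.incl_injective e)
  have hw' : h.incl v ≠ w := fun e => hw (h.incl_injective e)
  rw [incl_pairing, closeFun, if_neg hu', if_neg hw']

theorem IsCut.isGluing (h : G.IsCut S u w) :
    IsGluing G h.restrict h.compl.restrict h.incl h.compl.incl (h.lift u h.left_mem)
      (h.compl.lift (G.pairing u) h.pairing_left_notMem) where
  left_injective := h.incl_injective
  right_injective := h.compl.incl_injective
  left_ne_right x y e := h.compl.incl_mem y (by rw [← e]; exact h.incl_mem x)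
  cover z := by
    by_cases hz : z.1 ∈ S
    · exact Or.inl ⟨h.lift z hz, rfl⟩
    · exact Or.inr ⟨h.compl.lift z hz, rfl⟩
  left_colPerm := h.incl_colPerm
  right_colPerm := h.compl.incl_colPerm
  pairing_root := rfl
  pairing_root' := by
    rw [h.pairing_lift_left, h.compl.pairing_lift_left]
    rfl
  left_pairing := h.pairing_incl
  right_pairing := h.compl.pairing_incl

end Restrict

end TGraph

namespace TGraph

open Module

variable {G : TGraph}

theorem eq_of_fst_eq {a b c : Fin 3} (hab : a ≠ b) (hac : a ≠ c) (hbc : b ≠ c) {u v : G.V}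
    (h : u.1 = v.1) :
    u = v ∨ u = G.colPerm a v ∨ u = G.colPerm b v ∨ u = G.colPerm c v := by
  obtain rfl | ⟨d, rfl⟩ := G.eq_or_eq_colPerm h
  · exact Or.inl rfl
  · obtain rfl | rfl | rfl := eq_or_eq_or_eq_of_ne a b c hab hac hbc d <;> simp

/-- One side of a face of length two: either the two remaining corners on this side are joined
by a color-0 edge, or the bubbles of the region on this side form one side of a cut. -/
theorem IsExtremal.pairing_eq_or_isCut (hG : G.IsExtremal) {a b c : Fin 3} (hab : a ≠ b)
    (hac : a ≠ c) (hbc : b ≠ c) {x : G.V}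
    (hx : G.pairing (G.colPerm c (G.pairing x)) = G.colPerm c x)
    {f g : G.V → ZMod 2} (hf : f ∈ G.pairingInvariants ⊓ G.colInvariants a)
    (hg : g ∈ G.pairingInvariants ⊓ G.colInvariants b) (hfg : f x = g x + 1)
    (heq : ∀ v, v ≠ x → v ≠ G.pairing x → v ≠ G.colPerm c x → v ≠ G.colPerm c (G.pairing x) →
      f v = g v) :
    G.pairing (G.colPerm a x) = G.colPerm a (G.pairing x) ∨
      G.IsCut {β | β ≠ x.1 ∧ β ≠ (G.pairing x).1 ∧ f (β, 0) = f x}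
        (G.pairing (G.colPerm a x)) (G.pairing (G.colPerm a (G.pairing x))) := by
  have hXY : (G.pairing x).1 ≠ x.1 := hG.pairing_fst_ne x
  have hy : G.pairing (G.pairing x) = x := G.invol x
  have hx' : G.pairing (G.colPerm c x) = G.colPerm c (G.pairing x) := by rw [← hx, G.invol]
  obtain ⟨hfp, hfa⟩ := hf
  obtain ⟨hgp, hgb⟩ := hg
  have hfy : f (G.pairing x) = f x := hfp x
  have hgy : g (G.pairing x) = g x := hgp x
  generalize hyx : G.pairing x = y at *
  have hd : ∀ d (v : G.V), (G.colPerm d v).1 = v.1 := fun _ _ => rfl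
  have hout : ∀ v : G.V, v.1 ≠ x.1 → v.1 ≠ y.1 → f v = g v := by
    intro v h1 h2
    refine heq v ?_ ?_ ?_ ?_ <;> rintro rfl
    exacts [h1 rfl, h2 rfl, h1 rfl, h2 rfl]
  have hbub : ∀ v : G.V, v.1 ≠ x.1 → v.1 ≠ y.1 → f (v.1, 0) = f v := by
    intro v h1 h2
    have hb : f (G.colPerm b v) = f v := by
      rw [hout (G.colPerm b v) h1 h2, hgb, hout v h1 h2]
    obtain e | e | e | e := eq_of_fst_eq hab hac hbc (u := ((v.1, 0) : G.V)) (v := v) rfl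
    · rw [e]
    · rw [e, hfa]
    · rw [e, hb]
    · rw [e, ← G.colPerm_colPerm hab hac hbc, hfa, hb]
  have hne : ∀ {d e : Fin 3} (v : G.V), d ≠ e → G.colPerm d v ≠ G.colPerm e v := by
    intro d e v hde h
    obtain ⟨r, hdr, her⟩ := exists_third_color d e hde
    have h' := congrArg (G.colPerm d) h
    rw [colPerm_involutive, G.colPerm_colPerm hde hdr her] at h'
    exact G.colPerm_ne r v h'.symm
  have hspec : ∀ d, d ≠ c → ∀ v, v = x ∨ v = y → f (G.colPerm d v) = g (G.colPerm d v) := by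
    intro d hdc v hv
    refine heq _ ?_ ?_ ?_ ?_ <;> intro h
    all_goals
      rcases hv with rfl | rfl
      all_goals first
        | exact G.colPerm_ne _ _ h
        | exact hne _ hdc h
        | exact hXY (congrArg Prod.fst h :)
        | exact hXY (congrArg Prod.fst h :).symm
  have hfb : ∀ v, v = x ∨ v = y → f (G.colPerm b v) ≠ f x := by
    intro v hv
    rw [hspec b hbc v hv, hgb]
    rcases hv with rfl | rfl
    · rw [hfg]; simp
    · rw [hgy, hfg]; simp
  have key : ∀ v, v ≠ x → v ≠ y → v ≠ G.colPerm c x → v ≠ G.colPerm c y → f v = f x →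
      v = G.colPerm a x ∨ v = G.colPerm a y ∨
        v.1 ∈ {β | β ≠ x.1 ∧ β ≠ y.1 ∧ f (β, 0) = f x} := by
    intro v h1 h2 h3 h4 hv
    by_cases hX : v.1 = x.1
    · obtain rfl | rfl | rfl | rfl := eq_of_fst_eq hab hac hbc hX
      · exact absurd rfl h1
      · exact Or.inl rfl
      · exact absurd hv (hfb _ (Or.inl rfl))
      · exact absurd rfl h3
    by_cases hY : v.1 = y.1
    · obtain rfl | rfl | rfl | rfl := eq_of_fst_eq hab hac hbc hY
      · exact absurd rfl h2
      · exact Or.inr (Or.inl rfl)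
      · exact absurd hv (hfb _ (Or.inr rfl))
      · exact absurd rfl h4
    exact Or.inr (Or.inr ⟨hX, hY, (hbub v hX hY).trans hv⟩)
  have key' : ∀ v, v ≠ x → v ≠ y → v ≠ G.colPerm c x → v ≠ G.colPerm c y → f v = f x →
      G.pairing v = G.colPerm a x ∨ G.pairing v = G.colPerm a y ∨
        (G.pairing v).1 ∈ {β | β ≠ x.1 ∧ β ≠ y.1 ∧ f (β, 0) = f x} := by
    intro v h1 h2 h3 h4 hv
    have hswap : ∀ {s t : G.V}, G.pairing s = t → v ≠ t → G.pairing v ≠ s := by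
      rintro s t rfl h e
      exact h (by rw [← e, G.invol])
    exact key _ (hswap hyx h2) (hswap hy h1) (hswap hx' h4) (hswap hx h3) ((hfp v).trans hv)
  have hXY' : x.1 ≠ y.1 := fun e => hXY e.symm
  by_cases hp : G.pairing (G.colPerm a x) = G.colPerm a y
  · exact Or.inl hp
  right
  have hmem : ∀ v, v = x ∨ v = y → G.pairing (G.colPerm a v) = G.colPerm a x ∨
      G.pairing (G.colPerm a v) = G.colPerm a y ∨
      (G.pairing (G.colPerm a v)).1 ∈ {β | β ≠ x.1 ∧ β ≠ y.1 ∧ f (β, 0) = f x} := by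
    intro v hv
    refine key' _ ?_ ?_ ?_ ?_ ?_
    rotate_right
    · rw [hfa]
      rcases hv with rfl | rfl
      exacts [rfl, hfy]
    all_goals
      intro h
      rcases hv with rfl | rfl
      all_goals first
        | exact G.colPerm_ne _ _ h
        | exact hne _ hac h
        | exact hXY (congrArg Prod.fst h :)
        | exact hXY (congrArg Prod.fst h :).symm
  refine ⟨?_, ?_, ?_, ?_, ?_, ?_⟩
  · rcases hmem x (Or.inl rfl) with h | h | h
    exacts [absurd h (G.fixfree _), absurd h hp, h]
  · rcases hmem y (Or.inr rfl) with h | h | h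
    exacts [absurd (by rw [← h, G.invol]) hp, absurd h (G.fixfree _), h]
  · exact fun h => hXY' (congrArg Prod.fst (G.pairing.injective h) :)
  · rw [G.invol]
    exact fun h => h.1 rfl
  · rw [G.invol]
    exact fun h => h.2.1 rfl
  · rintro v ⟨h1, h2, h3⟩ h4 h5
    rw [hbub v h1 h2] at h3
    rcases key' v (fun h => h1 (congrArg Prod.fst h :)) (fun h => h2 (congrArg Prod.fst h :))
      (fun h => h1 (congrArg Prod.fst h :)) (fun h => h2 (congrArg Prod.fst h :)) h3 with h | h | h
    · exact absurd (by rw [← h, G.invol]) h4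
    · exact absurd (by rw [← h, G.invol]) h5
    · exact h

/-- The bubbles of `z` and `w` are joined by three parallel color-0 edges, not containing `z`
and `w`, nor the vertex `e`. -/
def IsDipole (G : TGraph) (e z w : G.V) : Prop :=
  z.1 ≠ w.1 ∧ ∀ c, G.pairing (G.colPerm c z) = G.colPerm c w ∧
    G.colPerm c z ≠ e ∧ G.colPerm c w ≠ e

theorem IsCut.exists_isDipole {S : Set G.B} {u w e : G.V} (h : G.IsCut S u w) (he : e.1 ∉ S)
    (hd : ∃ y z, h.restrict.IsDipole (h.lift u h.left_mem) y z) : ∃ y z, G.IsDipole e y z := by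
  obtain ⟨y, z, hyz, hd⟩ := hd
  refine ⟨h.incl y, h.incl z, fun e => hyz (Subtype.ext e), fun c => ⟨?_, ?_, ?_⟩⟩
  · obtain ⟨h1, h2, h3⟩ := hd c
    rw [← h.incl_colPerm, ← h.incl_colPerm, h.pairing_incl _ h2, h1]
    intro e
    apply h3
    rw [← h1, e, h.restrict.invol]
  · rintro rfl
    exact he (h.incl_mem y)
  · rintro rfl
    exact he (h.incl_mem z)

theorem isDipole_of_parallel {a b c : Fin 3} (hab : a ≠ b) (hac : a ≠ c) (hbc : b ≠ c)
    {e x y : G.V} (hxy : x.1 ≠ y.1) (hp : G.pairing x = y)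
    (hc : G.pairing (G.colPerm c x) = G.colPerm c y)
    (ha : G.pairing (G.colPerm a x) = G.colPerm a y) (hx : e.1 ≠ x.1) (hy : e.1 ≠ y.1) :
    G.IsDipole e (G.colPerm b x) (G.colPerm b y) := by
  refine ⟨hxy, fun d => ⟨?_, fun h => hx (congrArg Prod.fst h).symm,
    fun h => hy (congrArg Prod.fst h).symm⟩⟩
  obtain rfl | rfl | rfl := eq_or_eq_or_eq_of_ne a b c hab hac hbc d
  · rw [G.colPerm_colPerm hab hac hbc, G.colPerm_colPerm hab hac hbc, hc]
  · rw [G.colPerm_involutive, G.colPerm_involutive, hp]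
  · rw [G.colPerm_colPerm hbc.symm hac.symm hab.symm,
      G.colPerm_colPerm hbc.symm hac.symm hab.symm, ha]

theorem pairing_colPerm_of_parallel {x y : G.V} (hp : G.pairing x = y)
    (hd : ∀ d, G.pairing (G.colPerm d x) = G.colPerm d y) {v : G.V} (hv : v.1 = x.1) (d : Fin 3) :
    G.pairing (G.colPerm d v) = G.colPerm d (G.pairing v) := by
  obtain rfl | ⟨c, rfl⟩ := G.eq_or_eq_colPerm hv
  · rw [hd, hp]
  · by_cases hdc : d = c
    · subst hdc
      rw [hd, colPerm_involutive, colPerm_involutive, hp]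
    · obtain ⟨r, hdr, hcr⟩ := exists_third_color d c hdc
      rw [G.colPerm_colPerm hdc hdr hcr, hd, hd, G.colPerm_colPerm hdc hdr hcr]

theorem pairing_fst_of_parallel {x y : G.V} (hp : G.pairing x = y)
    (hd : ∀ d, G.pairing (G.colPerm d x) = G.colPerm d y) {v : G.V} (hv : v.1 = x.1) :
    (G.pairing v).1 = y.1 := by
  obtain rfl | ⟨c, rfl⟩ := G.eq_or_eq_colPerm hv
  · rw [hp]
  · rw [hd]
    rfl

theorem exists_isDipole_of_parallel {a b c : Fin 3} (hab : a ≠ b) (hac : a ≠ c) (hbc : b ≠ c)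
    {e x y : G.V} (hxy : x.1 ≠ y.1) (hp : G.pairing x = y)
    (hd : ∀ d, G.pairing (G.colPerm d x) = G.colPerm d y) : ∃ z w, G.IsDipole e z w := by
  by_cases hX : e.1 = x.1
  · have hY := pairing_fst_of_parallel hp hd hX
    refine ⟨e, G.pairing e, fun h => hxy (hX.symm.trans (h.trans hY)), fun d =>
      ⟨pairing_colPerm_of_parallel hp hd hX d, G.colPerm_ne d e, fun h => hxy ?_⟩⟩
    rw [← hX, ← hY]
    exact (congrArg Prod.fst h).symm
  by_cases hY : e.1 = y.1
  · have hp' : G.pairing y = x := by rw [← hp, G.invol]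
    have hd' : ∀ d, G.pairing (G.colPerm d y) = G.colPerm d x := fun d => by rw [← hd, G.invol]
    have hX' := pairing_fst_of_parallel hp' hd' hY
    refine ⟨G.pairing e, e, fun h => hX (h.symm.trans hX'), fun d =>
      ⟨?_, fun h => hX ?_, G.colPerm_ne d e⟩⟩
    · rw [pairing_colPerm_of_parallel hp hd hX' d, G.invol]
    · rw [← hX']
      exact (congrArg Prod.fst h).symm
  exact ⟨_, _, isDipole_of_parallel hab hac hbc hxy hp (hd c) (hd a) hX hY⟩

theorem b_pos_of_vertex (v : G.V) : 0 < G.b := Fintype.card_pos_iff.2 ⟨v.1⟩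

/-- An extremal graph contains a dipole avoiding any given vertex. -/
theorem IsExtremal.exists_isDipole {G : TGraph} (hG : G.IsExtremal) (e : G.V) :
    ∃ z w, G.IsDipole e z w := by
  induction hn : G.b using Nat.strong_induction_on generalizing G with
  | _ n ih =>
  subst hn
  obtain ⟨c, x, hx⟩ := hG.exists_face_length_two
  obtain ⟨a, b, hab, hac, hbc⟩ := exists_other_colors c
  obtain ⟨f, hf, g, hg, hfg, -, heq⟩ := hG.exists_regions hab hx
  have hgf : g x = f x + 1 := by
    rw [hfg, add_assoc, CharTwo.add_self_eq_zero, add_zero]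
  have hXY : x.1 ≠ (G.pairing x).1 := (hG.pairing_fst_ne x).symm
  have hx' : G.pairing (G.colPerm c x) = G.colPerm c (G.pairing x) := by rw [← hx, G.invol]
  have hS := hG.pairing_eq_or_isCut hab hac hbc hx hf hg hfg heq
  have hT := hG.pairing_eq_or_isCut hab.symm hbc hac hx hg hf hgf
    (fun v h1 h2 h3 h4 => (heq v h1 h2 h3 h4).symm)
  have hcut : ∀ {S : Set G.B} {u w : G.V}, G.IsCut S u w → e.1 ∉ S →
      ∃ z w, G.IsDipole e z w := by
    intro S u w h he
    refine h.exists_isDipole he (ih _ ?_ (h.isGluing.isExtremal_left hG) _ rfl)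
    have h1 := h.isGluing.b_eq
    have h2 := b_pos_of_vertex (h.compl.lift (G.pairing u) h.pairing_left_notMem)
    omega
  have hout : ∀ v : G.V, v.1 ≠ x.1 → v.1 ≠ (G.pairing x).1 → f v = g v := by
    intro v h1 h2
    refine heq v ?_ ?_ ?_ ?_ <;> intro h
    exacts [h1 (congrArg Prod.fst h :), h2 (congrArg Prod.fst h :), h1 (congrArg Prod.fst h :),
      h2 (congrArg Prod.fst h :)]
  rcases hS with hS | hS
  · rcases hT with hT | hT
    · refine exists_isDipole_of_parallel hab hac hbc hXY rfl fun d => ?_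
      obtain rfl | rfl | rfl := eq_or_eq_or_eq_of_ne a b c hab hac hbc d
      exacts [hS, hT, hx']
    · by_cases he : e.1 ∈ {β | β ≠ x.1 ∧ β ≠ (G.pairing x).1 ∧ g (β, 0) = g x}
      · exact ⟨_, _, isDipole_of_parallel hab hac hbc hXY rfl hx' hS he.1 he.2.1⟩
      · exact hcut hT he
  · by_cases he : e.1 ∈ {β | β ≠ x.1 ∧ β ≠ (G.pairing x).1 ∧ f (β, 0) = f x}
    · rcases hT with hT | hT
      · exact ⟨_, _, isDipole_of_parallel hab.symm hbc hac hXY rfl hx' hT he.1 he.2.1⟩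
      · refine hcut hT fun he' => ?_
        have h := hout (e.1, 0) he.1 he.2.1
        rw [he.2.2, he'.2.2, hgf] at h
        simp at h
    · exact hcut hS he

end TGraph

namespace TGraph

open Module

/-- The inverse of an isomorphism. -/
def Iso.symm {G H : TGraph} (φ : Iso G H) : Iso H G where
  toEquiv := φ.toEquiv.symm
  map_pairing v := by rw [Equiv.symm_apply_eq, φ.map_pairing, Equiv.apply_symm_apply]
  map_col c v := by rw [Equiv.symm_apply_eq, φ.map_col, Equiv.apply_symm_apply]

theorem Iso.b_eq {G H : TGraph} (φ : Iso G H) : G.b = H.b := by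
  have h := Fintype.card_congr φ.toEquiv
  rw [card_V, card_V] at h
  omega

theorem Iso.numFaces_le {G H : TGraph} (φ : Iso G H) (c : Fin 3) :
    H.numFaces c ≤ G.numFaces c := by
  rw [numFaces_eq_finrank, numFaces_eq_finrank,
    ← LinearEquiv.finrank_map_eq (LinearEquiv.funCongrLeft (ZMod 2) (ZMod 2) φ.toEquiv)]
  refine Submodule.finrank_mono ?_
  rintro _ ⟨f, ⟨hp, hc⟩, rfl⟩
  refine ⟨fun v => ?_, fun v => ?_⟩
  · exact (congrArg f (φ.map_pairing v)).trans (hp _)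
  · exact (congrArg f (φ.map_col c v)).trans (hc _)

theorem Iso.F_eq {G H : TGraph} (φ : Iso G H) : G.F = H.F :=
  Finset.sum_congr rfl fun c _ => (φ.symm.numFaces_le c).antisymm (φ.numFaces_le c)

theorem Iso.connected {G H : TGraph} (φ : Iso G H) (hH : H.Connected) : G.Connected := by
  rw [connected_iff] at hH ⊢
  intro f hp hc u v
  have h := hH (fun x => f (φ.symm.toEquiv x)) (fun x => by rw [φ.symm.map_pairing, hp])
    (fun c x => by rw [φ.symm.map_col, hc]) (φ.toEquiv u) (φ.toEquiv v)
  simpa [Iso.symm] using h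

theorem Iso.isExtremal {G H : TGraph} (φ : Iso G H) (hH : H.IsExtremal) : G.IsExtremal :=
  ⟨φ.connected hH.1, by rw [φ.F_eq, φ.b_eq]; exact hH.2⟩

theorem isGluing_glue (H K : TGraph) (p : H.V) (q : K.V) :
    IsGluing (glue H K p q) H K (inlV H K) (inrV H K) p q where
  left_injective := inlV_injective H K
  right_injective := inrV_injective H K
  left_ne_right := inlV_ne_inrV H K
  cover := by
    rintro ⟨u | u, k⟩
    exacts [Or.inl ⟨(u, k), rfl⟩, Or.inr ⟨(u, k), rfl⟩]
  left_colPerm _ _ := rfl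
  right_colPerm _ _ := rfl
  pairing_root := (glueFun_inlV H K p q p).trans (if_pos rfl)
  pairing_root' := (glueFun_inlV H K p q _).trans <|
    (if_neg (H.fixfree p)).trans (if_pos rfl)
  left_pairing x h1 h2 := (glueFun_inlV H K p q x).trans <| (if_neg h1).trans (if_neg h2)
  right_pairing y h1 h2 := (glueFun_inrV H K p q y).trans <| (if_neg h1).trans (if_neg h2)

namespace IsGluing

variable {G G' H K K' : TGraph} {i : H.V → G.V} {j : K.V → G.V} {i' : H.V → G'.V}
  {j' : K.V → G'.V} {p : H.V} {q : K.V}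

theorem map_pairing_left (h : IsGluing G H K i j p q) (h' : IsGluing G' H K i' j' p q)
    {φ : G.V → G'.V} (hi : ∀ x, φ (i x) = i' x) (hj : ∀ y, φ (j y) = j' y) (x : H.V) :
    φ (G.pairing (i x)) = G'.pairing (φ (i x)) := by
  by_cases h1 : x = p
  · rw [h1, h.pairing_root, hj, hi, h'.pairing_root]
  by_cases h2 : x = H.pairing p
  · rw [h2, h.pairing_root', hj, hi, h'.pairing_root']
  · rw [h.left_pairing x h1 h2, hi, hi, h'.left_pairing x h1 h2]

theorem isIso (h : IsGluing G H K i j p q) (h' : IsGluing G' H K i' j' p q) : IsIso G G' := by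
  let e := Equiv.ofBijective _ h.sumElim_bijective
  let φ : G.V ≃ G'.V := e.symm.trans (Equiv.ofBijective _ h'.sumElim_bijective)
  have hi : ∀ x, φ (i x) = i' x := fun x => by
    have hx : e.symm (i x) = Sum.inl x := e.symm_apply_eq.2 rfl
    simp [φ, hx]
  have hj : ∀ y, φ (j y) = j' y := fun y => by
    have hy : e.symm (j y) = Sum.inr y := e.symm_apply_eq.2 rfl
    simp [φ, hy]
  refine ⟨⟨φ, fun v => ?_, fun c v => ?_⟩⟩
  · rcases h.cover v with ⟨x, rfl⟩ | ⟨y, rfl⟩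
    exacts [h.map_pairing_left h' hi hj x, h.symm.map_pairing_left h'.symm hj hi y]
  · rcases h.cover v with ⟨x, rfl⟩ | ⟨y, rfl⟩
    · rw [← h.left_colPerm, hi, hi, h'.left_colPerm]
    · rw [← h.right_colPerm, hj, hj, h'.right_colPerm]

theorem comp_iso_right (h : IsGluing G H K i j p q) (φ : Iso K' K) {q' : K'.V}
    (hq : φ.toEquiv q' = q) : IsGluing G H K' i (j ∘ φ.toEquiv) p q' where
  left_injective := h.left_injective
  right_injective := h.right_injective.comp φ.toEquiv.injective
  left_ne_right x y := h.left_ne_right x _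
  cover z := (h.cover z).imp_right fun ⟨y, hy⟩ => ⟨φ.toEquiv.symm y, by simpa using hy⟩
  left_colPerm := h.left_colPerm
  right_colPerm c y := by
    rw [Function.comp_apply, φ.map_col, h.right_colPerm, Function.comp_apply]
  pairing_root := by rw [h.pairing_root, Function.comp_apply, hq]
  pairing_root' := by rw [h.pairing_root', Function.comp_apply, φ.map_pairing, hq]
  left_pairing := h.left_pairing
  right_pairing y h1 h2 := by
    subst hq
    rw [Function.comp_apply, Function.comp_apply, φ.map_pairing,
      h.right_pairing _ (fun e => h1 (φ.toEquiv.injective e))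
        (fun e => h2 (φ.toEquiv.injective (by rw [e, φ.map_pairing])))]

end IsGluing

theorem b_G2 : G2.b = 2 := Fintype.card_fin 2

theorem connected_G2 : G2.Connected := by
  refine connected_iff.2 fun f hp hc => ?_
  have key : ∀ i : Fin 2, f (i, 0) = f ((0 : Fin 2), 0) := by
    intro i
    fin_cases i
    · rfl
    · exact hp ((0 : Fin 2), (0 : Fin 4))
  intro u v
  rw [apply_eq_of_fst_eq hc (show u.1 = (u.1, (0 : Fin 4)).1 from rfl),
    apply_eq_of_fst_eq hc (show v.1 = (v.1, (0 : Fin 4)).1 from rfl)]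
  exact (key u.1).trans (key v.1).symm

theorem exists_sign_bubblePerm : ∀ c, ∃ (s : Fin 4 → ZMod 2) (k : Fin 4),
    (∀ l, s (bubblePerm c l) = s l) ∧ s k ≠ s 0 := by
  intro c
  fin_cases c
  exacts [⟨![0, 0, 1, 1], 2, by decide, by decide⟩, ⟨![0, 1, 0, 1], 1, by decide, by decide⟩,
    ⟨![0, 1, 1, 0], 1, by decide, by decide⟩]

theorem two_le_numFaces_G2 (c : Fin 3) : 2 ≤ G2.numFaces c := by
  obtain ⟨s, k, hs, hk⟩ := exists_sign_bubblePerm c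
  refine Finite.one_lt_card_iff_nontrivial.2
    ⟨Quotient.mk'' ((0 : Fin 2), k), Quotient.mk'' ((0 : Fin 2), (0 : Fin 4)), fun h => hk ?_⟩
  obtain ⟨⟨g, hg⟩, h⟩ := Quotient.exact h
  have hg' := apply_smul_of_mem_closure (f := fun v : G2.V => s v.2)
    (S := {G2.pairing, G2.colPerm c})
    (by rintro _ (rfl | rfl) v; exacts [rfl, hs v.2]) hg ((0 : Fin 2), (0 : Fin 4))
  rw [show g ((0 : Fin 2), (0 : Fin 4)) = ((0 : Fin 2), k) from h] at hg'
  exact hg'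

theorem isExtremal_G2 : G2.IsExtremal := by
  refine ⟨connected_G2, (two_mul_F_le connected_G2).antisymm ?_⟩
  have h0 := two_le_numFaces_G2 0
  have h1 := two_le_numFaces_G2 1
  have h2 := two_le_numFaces_G2 2
  rw [b_G2, G2.F_eq]
  omega

/-- The labeling of the vertices of a bubble starting from `k`. -/
def bubbleChart (k : Fin 4) : Fin 4 → Fin 4 := Fin.cons k fun c => bubblePerm c k

theorem bubbleChart_bubblePerm :
    ∀ c k l, bubbleChart k (bubblePerm c l) = bubblePerm c (bubbleChart k l) := by decide

theorem bubbleChart_injective : ∀ k, Function.Injective (bubbleChart k) := by decide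

theorem exists_iso_G2 {G : TGraph} (hG : G.Connected) {z w : G.V} (hzw : z.1 ≠ w.1)
    (hp : G.pairing z = w) (hd : ∀ c, G.pairing (G.colPerm c z) = G.colPerm c w) :
    ∃ φ : Iso G2 G, φ.toEquiv ((0 : Fin 2), (0 : Fin 4)) = z := by
  let r : G.V → Fin 4 → G.V := fun x k => (x.1, bubbleChart x.2 k)
  have hr : ∀ k, G.pairing (r z k) = r w k := by
    intro k
    induction k using Fin.cases with
    | zero => exact hp
    | succ c => exact hd c
  have hrinj : ∀ {x k l}, r x k = r x l → k = l := fun {x} k l h =>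
    bubbleChart_injective x.2 (congrArg Prod.snd h)
  let ψ : G2.V → G.V := fun v => r ((![z, w] : Fin 2 → G.V) v.1) v.2
  have hψp : ∀ v, ψ (G2.pairing v) = G.pairing (ψ v) := by
    rintro ⟨i, k⟩
    change Fin 2 at i
    fin_cases i
    · exact (hr k).symm
    · exact (G.pairing.eq_symm_apply.1 (by
        rw [Equiv.eq_symm_apply]
        exact (congrArg G.pairing (hr k).symm).trans (G.invol _))).symm
  have hψc : ∀ c v, ψ (G2.colPerm c v) = G.colPerm c (ψ v) := fun c v =>
    Prod.ext rfl (bubbleChart_bubblePerm c _ v.2)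
  have hinj : Function.Injective ψ := by
    rintro ⟨i, k⟩ ⟨i', k'⟩ h
    change Fin 2 at i i'
    fin_cases i <;> fin_cases i'
    · exact congrArg _ (hrinj h)
    · exact absurd (congrArg Prod.fst h) hzw
    · exact absurd (congrArg Prod.fst h).symm hzw
    · exact congrArg _ (hrinj h)
  have hsurj : Function.Surjective ψ := by
    classical
    have hinv : ∀ {α : Equiv.Perm G.V} {β : Equiv.Perm G2.V}, (∀ v, α (α v) = v) →
        (∀ v, ψ (β v) = α (ψ v)) → ∀ v, α v ∈ Set.range ψ ↔ v ∈ Set.range ψ := by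
      refine fun {α β} hα h v => ⟨?_, ?_⟩
      · rintro ⟨x, hx⟩
        exact ⟨β x, by rw [h, hx, hα]⟩
      · rintro ⟨x, rfl⟩
        exact ⟨β x, h x⟩
    intro v
    have h := connected_iff.1 hG (fun v => if v ∈ Set.range ψ then 1 else 0)
      (fun v => by simp only [hinv G.invol hψp])
      (fun c v => by simp only [hinv (G.colPerm_involutive c) (hψc c)]) v
      (ψ ((0 : Fin 2), (0 : Fin 4)))
    by_contra hv
    have hv' : v ∉ Set.range ψ := hv
    simp only [if_neg hv', if_pos (Set.mem_range_self _)] at h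
    exact zero_ne_one h
  exact ⟨⟨Equiv.ofBijective ψ ⟨hinj, hsurj⟩, hψp, hψc⟩, rfl⟩

/-- The complement of a dipole which is not a whole connected component. -/
theorem IsDipole.isCut {G : TGraph} {e z w : G.V} (h : G.IsDipole e z w)
    (hz : (G.pairing z).1 ≠ z.1) (hw : (G.pairing w).1 ≠ w.1) (hzw : G.pairing z ≠ w) :
    G.IsCut {z.1, w.1} z w := by
  have hwz : G.pairing w ≠ z := fun e => hzw (by rw [← e, G.invol])
  have hd' : ∀ c, G.pairing (G.colPerm c w) = G.colPerm c z := fun c => by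
    rw [← (h.2 c).1, G.invol]
  have hout : ∀ {x y : G.V}, (∀ c, G.pairing (G.colPerm c y) = G.colPerm c x) →
      (G.pairing x).1 ≠ x.1 → G.pairing x ≠ y → (G.pairing x).1 ≠ y.1 := by
    intro x y hd hx hxy hy
    obtain e | ⟨c, hc⟩ := G.eq_or_eq_colPerm hy
    · exact hxy e
    · rw [← G.invol (G.colPerm c y), hd] at hc
      exact G.colPerm_ne c x (G.pairing.injective hc).symm
  refine ⟨Or.inl rfl, Or.inr rfl, fun e => h.1 (congrArg Prod.fst e), ?_, ?_, ?_⟩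
  · rintro (e | e)
    exacts [hz e, hout hd' hz hzw e]
  · rintro (e | e)
    exacts [hout (fun c => (h.2 c).1) hw hwz e, hw e]
  · rintro v (hv | hv) h1 h2
    · obtain rfl | ⟨c, rfl⟩ := G.eq_or_eq_colPerm hv
      · exact absurd rfl h1
      · rw [(h.2 c).1]
        exact Or.inr rfl
    · obtain rfl | ⟨c, rfl⟩ := G.eq_or_eq_colPerm hv
      · exact absurd rfl h2
      · rw [hd']
        exact Or.inl rfl

theorem IsExtremal.isMelonic {G : TGraph} (hG : G.IsExtremal) : IsMelonic G := by
  induction hn : G.b using Nat.strong_induction_on generalizing G with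
  | _ n ih =>
  subst hn
  obtain ⟨-, e, -⟩ := hG.exists_face_length_two
  obtain ⟨z, w, hd⟩ := hG.exists_isDipole e
  by_cases hzw : G.pairing z = w
  · obtain ⟨φ, -⟩ := exists_iso_G2 hG.1 hd.1 hzw fun c => (hd.2 c).1
    exact .base ⟨φ.symm⟩
  have h := hd.isCut (hG.pairing_fst_ne z) (hG.pairing_fst_ne w) hzw
  have hlift : ∀ c, h.restrict.pairing (h.restrict.colPerm c (h.lift z h.left_mem)) =
      h.restrict.colPerm c (h.lift w h.right_mem) := by
    intro c
    have h1 : h.restrict.colPerm c (h.lift z h.left_mem) ≠ h.lift z h.left_mem :=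
      h.restrict.colPerm_ne c _
    have h2 : h.restrict.colPerm c (h.lift z h.left_mem) ≠
        h.restrict.pairing (h.lift z h.left_mem) := by
      rw [h.pairing_lift_left]
      exact fun e => hd.1 (congrArg (fun v => (h.incl v).1) e)
    apply h.incl_injective
    rw [← h.pairing_incl _ h1 h2]
    exact (hd.2 c).1
  obtain ⟨φ, hφ⟩ := exists_iso_G2 (h.isGluing.connected_left hG.1)
    (fun e => hd.1 (congrArg Subtype.val e)) h.pairing_lift_left hlift
  have hglue := h.isGluing.symm.comp_iso_right φ hφ
  have hK := h.isGluing.symm.isExtremal_left hG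
  have hb := h.isGluing.b_eq
  have hpos := b_pos_of_vertex (h.lift z h.left_mem)
  exact .insert (ih _ (by omega) hK rfl) _ (hglue.isIso (isGluing_glue _ _ _ _))

end TGraph

open TGraph

theorem IsMelonic.isExtremal {G : TGraph} (hG : IsMelonic G) : G.IsExtremal := by
  induction hG with
  | base h => exact h.some.isExtremal isExtremal_G2
  | @insert K _ v _ h hK =>
    refine h.some.isExtremal ?_
    have hglue : IsGluing (K.insertDipole v) K G2 _ _ _ _ := isGluing_glue K G2 v _
    have hF := hglue.F_add_three
    have hb := hglue.b_eq
    have h2 := isExtremal_G2.2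
    have hK2 := hK.2
    exact ⟨hglue.connected hK.1 connected_G2, by omega⟩

theorem exists_isMelonic (n : ℕ) : ∃ G : TGraph, IsMelonic G ∧ G.b = 2 * (n + 1) := by
  induction n with
  | zero => exact ⟨G2, .base ⟨⟨Equiv.refl _, fun _ => rfl, fun _ _ => rfl⟩⟩, b_G2⟩
  | succ n ih =>
    obtain ⟨G, hG, hb⟩ := ih
    have hpos : 0 < Fintype.card G.B := by change 0 < G.b; omega
    obtain ⟨β⟩ := Fintype.card_pos_iff.1 hpos
    refine ⟨G.insertDipole (β, 0),
      .insert hG (β, 0) ⟨⟨Equiv.refl _, fun _ => rfl, fun _ _ => rfl⟩⟩, ?_⟩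
    have h := (isGluing_glue G G2 (β, 0) ((0 : Fin 2), (0 : Fin 4))).b_eq
    rw [hb, b_G2] at h
    exact h

theorem TGraph.MaximizesFaces.isExtremal {G : TGraph} (hG : G.MaximizesFaces) (heven : 2 ∣ G.b)
    (hpos : 0 < G.b) : G.IsExtremal := by
  obtain ⟨n, hn⟩ := heven
  obtain ⟨M, hM, hb⟩ := exists_isMelonic (n - 1)
  have hMb : M.b = G.b := by omega
  have h1 := hG.2 M hM.isExtremal.1 hMb
  have h2 := hM.isExtremal.2
  have h3 := two_mul_F_le hG.1
  exact ⟨hG.1, by omega⟩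

/-- Among connected graphs of the tetrahedral model with an even
(positive) number `b` of bubbles, the graphs maximizing the number of faces
are exactly the melonic graphs, and they satisfy `F(G) = (3/2) b + 3`. -/
theorem even_maximizers_melonic (G : TGraph) (hG : G.Connected)
    (heven : 2 ∣ G.b) (hpos : 0 < G.b) :
    (G.MaximizesFaces ↔ IsMelonic G) ∧
      (G.MaximizesFaces → (G.F : ℚ) = 3 / 2 * G.b + 3) := by
  refine ⟨⟨fun h => (h.isExtremal heven hpos).isMelonic, fun h => ⟨hG, fun H hH hb => ?_⟩⟩,
    fun h => ?_⟩
  · have h1 := h.isExtremal.2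
    have h2 := two_mul_F_le hH
    omega
  · have h1 : (2 * G.F : ℚ) = 3 * G.b + 6 := by exact_mod_cast (h.isExtremal heven hpos).2
    linarith
end
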